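/- arXiv:0807.1825 — 2 statements merged into one kernel-verified Lean document; each statement's English description precedes it below -/
import Mathlib

section
/- Let 0 < α < 2, d ≥ 1, and D = {x ∈ ℝ^d : x_d > 0}. The constant κ_{d,α} in the fractional Hardy inequality for D is optimal: for every constant K > κ_{d,α} there exists a continuous function u : ℝ^d → ℝ with compact support in D such that (1/2) ∫_D ∫_D (u(x) − u(y))² / |x − y|^{d+α} dx dy < K ∫_D u(x)² x_d^{−α} dx. -/
open MeasureTheory Real Set

/-- The Euler beta function. -/
noncomputable def eulerBeta (a b : ℝ) : ℝ := Real.Gamma a * Real.Gamma b / Real.Gamma (a + b)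

/-- The optimal fractional Hardy constant for the half-space in dimension `d`. -/
noncomputable def kappa (d : ℕ) (α : ℝ) : ℝ :=
  (Real.pi ^ (((d : ℝ) - 1) / 2) * Real.Gamma ((1 + α) / 2) / Real.Gamma ((α + d) / 2)) *
    ((eulerBeta ((1 + α) / 2) ((2 - α) / 2) - 2 ^ α) / (α * 2 ^ α))

/-- The open upper half-space in `ℝ^{d+1}`. -/
def halfSpace (d : ℕ) : Set (EuclideanSpace ℝ (Fin (d + 1))) :=
  {x | 0 < x (Fin.last d)}



lemma fh_lintegral_beta {a b : ℝ} (ha : 0 < a) (hb : 0 < b) :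
    ∫⁻ x in Ioo (0:ℝ) 1, ENNReal.ofReal (x ^ (a - 1) * (1 - x) ^ (b - 1)) =
      ENNReal.ofReal (ProbabilityTheory.beta a b) := by
  have h1 := ProbabilityTheory.lintegral_betaPDF_eq_one ha hb
  rw [ProbabilityTheory.lintegral_betaPDF] at h1
  have hp := ProbabilityTheory.beta_pos ha hb
  calc _ = ∫⁻ x in Ioo (0:ℝ) 1, ENNReal.ofReal (ProbabilityTheory.beta a b) *
        ENNReal.ofReal (1 / ProbabilityTheory.beta a b * x ^ (a - 1) * (1 - x) ^ (b - 1)) := by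
        congr 1; ext x
        rw [← ENNReal.ofReal_mul hp.le]
        congr 1; field_simp
    _ = _ := by
        rw [lintegral_const_mul' _ _ (by simp), h1, mul_one]

lemma fh_beta_integrable {a b : ℝ} (ha : 0 < a) (hb : 0 < b) :
    IntegrableOn (fun x : ℝ => x ^ (a - 1) * (1 - x) ^ (b - 1)) (Ioo 0 1) := by
  refine ⟨by fun_prop, ?_⟩
  rw [hasFiniteIntegral_iff_ofReal, fh_lintegral_beta ha hb]
  · simp
  · filter_upwards [self_mem_ae_restrict measurableSet_Ioo] with x hx
    have h1 := hx.1
    have h2 : 0 < 1 - x := by linarith [hx.2]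
    show 0 ≤ _
    positivity

lemma fh_beta_integral {a b : ℝ} (ha : 0 < a) (hb : 0 < b) :
    ∫ x in Ioo (0:ℝ) 1, x ^ (a - 1) * (1 - x) ^ (b - 1) = ProbabilityTheory.beta a b := by
  rw [integral_eq_lintegral_of_nonneg_ae, fh_lintegral_beta ha hb]
  · exact ENNReal.toReal_ofReal (ProbabilityTheory.beta_pos ha hb).le
  · filter_upwards [self_mem_ae_restrict measurableSet_Ioo] with x hx
    have h1 := hx.1
    have h2 : 0 < 1 - x := by linarith [hx.2]
    show 0 ≤ _
    positivity
  · fun_prop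

lemma fh_one_sub_rpow {α t : ℝ} (hα0 : 0 < α) (hα2 : α < 2) (ht0 : 0 < t) (ht1 : t < 1) :
    (1 - t ^ ((α - 1) / 2)) ^ 2 ≤ (1 + t ^ (α - 1)) * (1 - t) ^ 2 := by
  have h1t : 0 < 1 - t := by linarith
  have hsq : t ^ (α - 1) = (t ^ ((α - 1) / 2)) ^ 2 := by
    rw [← Real.rpow_natCast, ← Real.rpow_mul ht0.le]; norm_num
  rw [hsq]
  have hp : 0 < t ^ ((α - 1) / 2) := by positivity
  rcases le_total 0 ((α - 1) / 2) with h | h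
  · have h1 : t ^ ((α - 1) / 2) ≤ 1 := Real.rpow_le_one ht0.le ht1.le h
    have h2 : t ≤ t ^ ((α - 1) / 2) := by
      simpa using Real.rpow_le_rpow_of_exponent_ge ht0 ht1.le (show (α - 1) / 2 ≤ 1 by linarith)
    have h3 : (1 - t ^ ((α - 1) / 2)) ^ 2 ≤ (1 - t) ^ 2 := by
      apply pow_le_pow_left₀ <;> linarith
    nlinarith [mul_nonneg (sq_nonneg (t ^ ((α - 1) / 2))) (sq_nonneg (1 - t))]
  · set c := t ^ ((α - 1) / 2) with hc
    have hci : c * t ^ (-((α - 1) / 2)) = 1 := by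
      rw [hc, ← Real.rpow_add ht0]; simp
    set e := t ^ (-((α - 1) / 2)) with he
    have h1 : e ≤ 1 := Real.rpow_le_one ht0.le ht1.le (by linarith)
    have h2 : t ≤ e := by
      simpa using Real.rpow_le_rpow_of_exponent_ge ht0 ht1.le (show -((α - 1) / 2) ≤ 1 by linarith)
    have h3 : (1 - e) ^ 2 ≤ (1 - t) ^ 2 := by
      apply pow_le_pow_left₀ <;> linarith
    have h4 : (1 - c) ^ 2 = c ^ 2 * (1 - e) ^ 2 := by
      rw [← mul_pow, mul_sub, hci]; ring
    rw [h4]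
    nlinarith [mul_le_mul_of_nonneg_left h3 (sq_nonneg c), sq_nonneg (1 - t)]

lemma fh_f_integrable {α : ℝ} (hα0 : 0 < α) (hα2 : α < 2) :
    IntegrableOn (fun t : ℝ => (1 - t ^ ((α - 1) / 2)) ^ 2 * (1 - t) ^ (-1 - α)) (Ioo 0 1) := by
  have h1 := fh_beta_integrable (a := 1) (b := 2 - α) one_pos (by linarith)
  have h2 := fh_beta_integrable (a := α) (b := 2 - α) hα0 (by linarith)
  refine (h1.add h2).mono' (by fun_prop) ?_
  filter_upwards [self_mem_ae_restrict measurableSet_Ioo] with t ht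
  have h1t : 0 < 1 - t := by linarith [ht.2]
  have := fh_one_sub_rpow hα0 hα2 ht.1 ht.2
  have hr : (1 - t) ^ (2 - α - 1) = (1 - t) ^ 2 * (1 - t) ^ (-1 - α) := by
    rw [← Real.rpow_natCast, ← Real.rpow_add h1t]; congr 1; push_cast; ring
  have hp : 0 < (1 - t) ^ (-1 - α) := by positivity
  rw [Real.norm_of_nonneg (by positivity)]
  simp only [Pi.add_apply, sub_self, Real.rpow_zero, hr]
  nlinarith [mul_le_mul_of_nonneg_right this hp.le]

/-- antiderivative -/
noncomputable def fhG (α t : ℝ) : ℝ :=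
  (1 / α) * (t ^ α * (1 - t) ^ (-α) + (1 - t) ^ (-α) - 2 * (t ^ ((α + 1) / 2) * (1 - t) ^ (-α))
    - t ^ ((α + 1) / 2) * (1 - t) ^ (1 - α))

lemma fhG_deriv {α t : ℝ} (hα0 : 0 < α) (ht0 : 0 < t) (ht1 : t < 1) :
    HasDerivAt (fhG α) ((1 - t ^ ((α - 1) / 2)) ^ 2 * (1 - t) ^ (-1 - α)
      - (3 - α) / (2 * α) * (t ^ ((α + 1) / 2 - 1) * (1 - t) ^ (2 - α - 1))) t := by
  have h1t : 0 < 1 - t := by linarith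
  have hs : HasDerivAt (fun t : ℝ => 1 - t) (-1) t := by
    simpa using (hasDerivAt_id t).const_sub 1
  have d1 : ∀ p : ℝ, HasDerivAt (fun t : ℝ => t ^ p) (p * t ^ (p - 1)) t := fun p =>
    Real.hasDerivAt_rpow_const (Or.inl ht0.ne')
  have d2 : ∀ p : ℝ, HasDerivAt (fun t : ℝ => (1 - t) ^ p) (-1 * p * (1 - t) ^ (p - 1)) t :=
    fun p => hs.rpow_const (Or.inl h1t.ne')
  have key := (((((d1 α).mul (d2 (-α))).add (d2 (-α))).sub
    (((d1 ((α + 1) / 2)).mul (d2 (-α))).const_mul 2)).sub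
    ((d1 ((α + 1) / 2)).mul (d2 (1 - α)))).const_mul (1 / α)
  refine (key.congr_deriv ?_)
  -- express in base quantities
  have e1 : t ^ (α - 1) = (t ^ ((α - 1) / 2)) ^ 2 := by
    rw [← Real.rpow_natCast, ← Real.rpow_mul ht0.le]; norm_num
  have e2 : t ^ α = t * (t ^ ((α - 1) / 2)) ^ 2 := by
    rw [← e1]
    nth_rewrite 2 [← Real.rpow_one t]
    rw [← Real.rpow_add ht0]; congr 1; ring
  have e3 : t ^ ((α + 1) / 2) = t * t ^ ((α - 1) / 2) := by
    nth_rewrite 2 [← Real.rpow_one t]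
    rw [← Real.rpow_add ht0]; congr 1; ring
  have e4 : t ^ ((α + 1) / 2 - 1) = t ^ ((α - 1) / 2) := by congr 1; ring
  have f0 : (1 - t) ^ (-α - 1) = (1 - t) ^ (-1 - α) := by congr 1; ring
  have f1 : (1 - t) ^ (-α) = (1 - t) * (1 - t) ^ (-1 - α) := by
    nth_rewrite 2 [← Real.rpow_one (1 - t)]
    rw [← Real.rpow_add h1t]; congr 1; ring
  have f2 : (1 - t) ^ (1 - α) = (1 - t) ^ 2 * (1 - t) ^ (-1 - α) := by
    rw [← Real.rpow_natCast, ← Real.rpow_add h1t]; congr 1; push_cast; ring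
  have f3 : (1 - t) ^ (2 - α - 1) = (1 - t) ^ 2 * (1 - t) ^ (-1 - α) := by
    rw [← f2]; congr 1; ring
  have f4 : (1 - t) ^ (1 - α - 1) = (1 - t) * (1 - t) ^ (-1 - α) := by
    rw [← f1]; congr 1; ring
  rw [e1, e2, e3, e4, f0, f3, f4, f2, f1]
  field_simp
  ring

lemma fhG_eq {α t : ℝ} (ht0 : 0 < t) (ht1 : t < 1) :
    fhG α t = (1 / α) * ((t * (1 - t ^ ((α - 1) / 2)) ^ 2 + (1 - t) * (1 - t ^ ((α + 1) / 2)))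
      * (1 - t) ^ (-α)) := by
  have h1t : 0 < 1 - t := by linarith
  have e2 : t ^ α = t * (t ^ ((α - 1) / 2)) ^ 2 := by
    rw [← Real.rpow_natCast, ← Real.rpow_mul ht0.le]
    nth_rewrite 2 [← Real.rpow_one t]
    rw [← Real.rpow_add ht0]; congr 1; push_cast; ring
  have e3 : t ^ ((α + 1) / 2) = t * t ^ ((α - 1) / 2) := by
    nth_rewrite 2 [← Real.rpow_one t]
    rw [← Real.rpow_add ht0]; congr 1; ring
  have f1 : (1 - t) ^ (1 - α) = (1 - t) * (1 - t) ^ (-α) := by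
    nth_rewrite 2 [← Real.rpow_one (1 - t)]
    rw [← Real.rpow_add h1t]; congr 1
  rw [fhG, e2, e3, f1]; ring

open Filter Topology in
lemma fhG_tendsto_zero {α : ℝ} (hα0 : 0 < α) :
    Tendsto (fhG α) (𝓝[>] 0) (𝓝 (1 / α)) := by
  have : ContinuousAt (fhG α) 0 := by
    unfold fhG
    have h1 : ∀ p : ℝ, ContinuousAt (fun t : ℝ => (1 - t) ^ p) 0 := fun p =>
      (by fun_prop : ContinuousAt (fun t : ℝ => 1 - t) 0).rpow_const (Or.inl (by norm_num))
    have h2 : ∀ p : ℝ, 0 < p → ContinuousAt (fun t : ℝ => t ^ p) 0 := fun p hp =>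
      Real.continuousAt_rpow_const _ _ (Or.inr hp.le)
    have := h1 (-α); have := h1 (1 - α); have := h2 α hα0
    have := h2 ((α + 1) / 2) (by linarith)
    fun_prop
  have h := this.tendsto
  have h0 : fhG α 0 = 1 / α := by
    simp [fhG, Real.zero_rpow hα0.ne', Real.zero_rpow (show (α + 1) / 2 ≠ 0 by linarith)]
  rw [h0] at h
  exact h.mono_left nhdsWithin_le_nhds

open Filter Topology in
lemma fhG_tendsto_one {α : ℝ} (hα0 : 0 < α) (hα2 : α < 2) :
    Tendsto (fhG α) (𝓝[<] 1) (𝓝 0) := by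
  have hb : Tendsto (fun t : ℝ => (1 / α) * ((3 + t ^ (α - 1)) * (1 - t) ^ (2 - α))) (𝓝[<] 1)
      (𝓝 0) := by
    have : ContinuousAt (fun t : ℝ => (1 / α) * ((3 + t ^ (α - 1)) * (1 - t) ^ (2 - α))) 1 := by
      have h1 : ContinuousAt (fun t : ℝ => (1 - t) ^ (2 - α)) 1 :=
        (by fun_prop : ContinuousAt (fun t : ℝ => 1 - t) 1).rpow_const (Or.inr (by linarith))
      have h2 : ContinuousAt (fun t : ℝ => t ^ (α - 1)) 1 :=
        Real.continuousAt_rpow_const _ _ (Or.inl (by norm_num))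
      fun_prop
    have h := this.tendsto
    simp only [sub_self, Real.zero_rpow (show 2 - α ≠ 0 by linarith), mul_zero] at h
    exact h.mono_left nhdsWithin_le_nhds
  have hev : ∀ᶠ t : ℝ in 𝓝[<] 1, t ∈ Ioo (0:ℝ) 1 := Ioo_mem_nhdsLT one_pos
  refine tendsto_of_tendsto_of_tendsto_of_le_of_le' tendsto_const_nhds hb ?_ ?_
  · filter_upwards [hev] with t ht
    have h1t : 0 < 1 - t := by linarith [ht.2]
    have ht0 := ht.1
    rw [fhG_eq ht.1 ht.2]
    have : t ^ ((α + 1) / 2) ≤ 1 := Real.rpow_le_one ht0.le ht.2.le (by linarith)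
    have : 0 ≤ 1 - t ^ ((α + 1) / 2) := by linarith
    positivity
  · filter_upwards [hev] with t ht
    have h1t : 0 < 1 - t := by linarith [ht.2]
    have ht0 := ht.1
    rw [fhG_eq ht.1 ht.2]
    have h2 : t ^ (2:ℝ) ≤ t ^ ((α + 1) / 2) :=
      Real.rpow_le_rpow_of_exponent_ge ht0 ht.2.le (by linarith)
    rw [Real.rpow_two] at h2
    have h3 := fh_one_sub_rpow hα0 hα2 ht.1 ht.2
    have hr : (1 - t) ^ (2 - α) = (1 - t) ^ 2 * (1 - t) ^ (-α) := by
      rw [← Real.rpow_natCast, ← Real.rpow_add h1t]; congr 1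
    rw [hr, ← mul_assoc (3 + _)]
    gcongr
    have h4 : t * (1 - t ^ ((α - 1) / 2)) ^ 2 ≤ (1 - t ^ ((α - 1) / 2)) ^ 2 := by
      nlinarith [sq_nonneg (1 - t ^ ((α - 1) / 2)), ht.2]
    have h5 : (1 - t) * (1 - t ^ ((α + 1) / 2)) ≤ (1 - t) * (2 * (1 - t)) := by
      gcongr
      nlinarith [sq_nonneg (1-t)]
    linarith

lemma fh_f_integral {α : ℝ} (hα0 : 0 < α) (hα2 : α < 2) :
    ∫ t in Ioo (0:ℝ) 1, (1 - t ^ ((α - 1) / 2)) ^ 2 * (1 - t) ^ (-1 - α) =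
      -(1 / α) + (3 - α) / (2 * α) * ProbabilityTheory.beta ((α + 1) / 2) (2 - α) := by
  have hf := fh_f_integrable hα0 hα2
  have hr := (fh_beta_integrable (a := (α + 1) / 2) (b := 2 - α) (by linarith)
    (by linarith)).const_mul ((3 - α) / (2 * α))
  have hi := hf.sub hr
  have hI : IntervalIntegrable (fun t : ℝ => (1 - t ^ ((α - 1) / 2)) ^ 2 * (1 - t) ^ (-1 - α)
      - (3 - α) / (2 * α) * (t ^ ((α + 1) / 2 - 1) * (1 - t) ^ (2 - α - 1))) volume 0 1 := by
    rw [intervalIntegrable_iff_integrableOn_Ioo_of_le zero_le_one]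
    exact hi
  have h := intervalIntegral.integral_eq_sub_of_hasDerivAt_of_tendsto (zero_lt_one' ℝ)
    (fun t ht => fhG_deriv hα0 ht.1 ht.2) hI (fhG_tendsto_zero hα0) (fhG_tendsto_one hα0 hα2)
  rw [intervalIntegral.integral_of_le zero_le_one, integral_Ioc_eq_integral_Ioo,
    integral_sub hf hr, integral_const_mul, fh_beta_integral (by linarith) (by linarith)] at h
  linarith


lemma fh_gamma_identity {α : ℝ} (hα0 : 0 < α) (hα2 : α < 2) :
    -(1 / α) + (3 - α) / (2 * α) * ProbabilityTheory.beta ((α + 1) / 2) (2 - α) =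
      (eulerBeta ((1 + α) / 2) ((2 - α) / 2) - 2 ^ α) / (α * 2 ^ α) := by
  have hd := Real.Gamma_mul_Gamma_add_half (1 - α / 2)
  have e1 : 1 - α / 2 + 1 / 2 = (3 - α) / 2 := by ring
  have e2 : 2 * (1 - α / 2) = 2 - α := by ring
  have e3 : (1:ℝ) - (2 - α) = α - 1 := by ring
  rw [e1, e2, e3] at hd
  have hG : Real.Gamma ((3 - α) / 2 + 1) = (3 - α) / 2 * Real.Gamma ((3 - α) / 2) :=
    Real.Gamma_add_one (by linarith)
  have hh : Real.Gamma (3 / 2) = √π / 2 := by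
    have := Real.Gamma_add_one (s := 1 / 2) (by norm_num)
    rw [Real.Gamma_one_half_eq] at this
    rw [show (3:ℝ) / 2 = 1 / 2 + 1 by norm_num, this]; ring
  have h2 : (2:ℝ) ^ (α - 1) = 2 ^ α / 2 := by
    rw [Real.rpow_sub two_pos, Real.rpow_one]
  rw [h2] at hd
  unfold ProbabilityTheory.beta eulerBeta
  rw [show (α + 1) / 2 + (2 - α) = (3 - α) / 2 + 1 by ring, hG,
    show (1 + α) / 2 + (2 - α) / 2 = 3 / 2 by ring, hh, show (1 + α) / 2 = (α + 1) / 2 by ring,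
    show (2 - α) / 2 = 1 - α / 2 by ring]
  have p1 : 0 < Real.Gamma ((3 - α) / 2) := Real.Gamma_pos_of_pos (by linarith)
  have p2 : (0:ℝ) < 2 ^ α := by positivity
  have p3 : 0 < √π := by positivity
  have p4 : 3 - α ≠ 0 := by linarith
  have hd' : Real.Gamma (1 - α / 2) = Real.Gamma (2 - α) * (2 ^ α / 2) * √π / Real.Gamma ((3 - α) / 2) := by
    rw [← hd]; field_simp
  rw [hd']
  field_simp
  ring

lemma fh_halfline {α : ℝ} (hα0 : 0 < α) (hα2 : α < 2) :
    ∫⁻ t in Ioi (0:ℝ), ENNReal.ofReal ((1 - t ^ ((α - 1) / 2)) ^ 2 * |t - 1| ^ (-1 - α)) =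
      ENNReal.ofReal (2 * ((eulerBeta ((1 + α) / 2) ((2 - α) / 2) - 2 ^ α) / (α * 2 ^ α))) := by
  set J := ∫⁻ t in Ioo (0:ℝ) 1, ENNReal.ofReal ((1 - t ^ ((α - 1) / 2)) ^ 2 * |t - 1| ^ (-1 - α))
    with hJ
  have hval : J = ENNReal.ofReal ((eulerBeta ((1 + α) / 2) ((2 - α) / 2) - 2 ^ α) / (α * 2 ^ α)) := by
    rw [← fh_gamma_identity hα0 hα2, ← fh_f_integral hα0 hα2,
      ofReal_integral_eq_lintegral_ofReal (fh_f_integrable hα0 hα2)]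
    · refine setLIntegral_congr_fun measurableSet_Ioo fun t ht => ?_
      have : |t - 1| = 1 - t := by rw [abs_sub_comm, abs_of_pos (by linarith [ht.2])]
      simp only [this]
    · filter_upwards [self_mem_ae_restrict measurableSet_Ioo] with t ht
      have h1t : 0 < 1 - t := by linarith [ht.2]
      show 0 ≤ _
      positivity
  have hinv : ∫⁻ t in Ioi (1:ℝ), ENNReal.ofReal ((1 - t ^ ((α - 1) / 2)) ^ 2 * |t - 1| ^ (-1 - α))
      = J := by
    have him : (fun t : ℝ => t⁻¹) '' Ioo 0 1 = Ioi 1 := by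
      rw [Set.image_inv_eq_inv]
      simpa using Set.inv_Ioo_0_left (zero_lt_one' ℝ)
    rw [← him, lintegral_image_eq_lintegral_abs_deriv_mul measurableSet_Ioo
      (f' := fun t => -(t ^ 2)⁻¹)
      (fun t ht => (hasDerivAt_inv ht.1.ne').hasDerivWithinAt) (fun x _ y _ h => inv_injective h)]
    refine setLIntegral_congr_fun measurableSet_Ioo fun t ht => ?_
    have h1t : 0 < 1 - t := by linarith [ht.2]
    have ht0 := ht.1
    rw [← ENNReal.ofReal_mul (abs_nonneg _)]
    congr 1
    have a1 : |t⁻¹ - 1| = t⁻¹ * (1 - t) := by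
      rw [abs_of_pos]
      · field_simp
      · have : t⁻¹ - 1 = t⁻¹ * (1 - t) := by field_simp
        rw [this]; positivity
    have a2 : |t - 1| = 1 - t := by rw [abs_sub_comm, abs_of_pos h1t]
    rw [a1, a2, abs_neg, abs_of_pos (by positivity), Real.mul_rpow (by positivity) h1t.le,
      Real.inv_rpow ht0.le, Real.inv_rpow ht0.le, ← Real.rpow_neg ht0.le (-1 - α)]
    have e : t ^ (-(-1 - α)) = t ^ 2 * (t ^ ((α - 1) / 2)) ^ 2 := by
      rw [← Real.rpow_natCast, ← Real.rpow_natCast, ← Real.rpow_mul ht0.le, ← Real.rpow_add ht0]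
      congr 1; push_cast; ring
    rw [e]
    have : 0 < t ^ ((α - 1) / 2) := by positivity
    field_simp
    ring
  have hnn : 0 ≤ (eulerBeta ((1 + α) / 2) ((2 - α) / 2) - 2 ^ α) / (α * 2 ^ α) := by
    rw [← fh_gamma_identity hα0 hα2, ← fh_f_integral hα0 hα2]
    refine setIntegral_nonneg measurableSet_Ioo fun t ht => ?_
    have h1t : 0 < 1 - t := by linarith [ht.2]
    positivity
  have hsplit : Ioi (0:ℝ) = Ioc 0 1 ∪ Ioi 1 := (Ioc_union_Ioi_eq_Ioi zero_le_one).symm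
  rw [hsplit, lintegral_union measurableSet_Ioi (by
    rw [Set.disjoint_left]; intro x hx hx'; exact absurd hx' (not_lt.mpr hx.2)), hinv,
    setLIntegral_congr Ioo_ae_eq_Ioc.symm, ← hJ, hval, ← ENNReal.ofReal_add hnn hnn]
  congr 1; ring

lemma fh_gamma_lint {s r : ℝ} (hs : 0 < s) (hr : 0 < r) :
    ∫⁻ t in Ioi (0:ℝ), ENNReal.ofReal (t ^ (s - 1) * Real.exp (-(r * t))) =
      ENNReal.ofReal (r ^ (-s) * Real.Gamma s) := by
  have h := Real.integral_rpow_mul_exp_neg_mul_Ioi hs hr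
  have hpos : 0 < (1 / r) ^ s * Real.Gamma s :=
    mul_pos (by positivity) (Real.Gamma_pos_of_pos hs)
  rw [← ofReal_integral_eq_lintegral_ofReal, h]
  · rw [one_div, Real.inv_rpow hr.le, Real.rpow_neg hr.le]
  · by_contra hc
    rw [integral_undef hc] at h
    linarith
  · filter_upwards [self_mem_ae_restrict measurableSet_Ioi] with t ht
    have : 0 < t := ht
    show 0 ≤ _
    positivity

lemma fh_gauss_lint (d : ℕ) {t : ℝ} (ht : 0 < t) :
    ∫⁻ z : EuclideanSpace ℝ (Fin d), ENNReal.ofReal (Real.exp (-t * ‖z‖ ^ 2)) =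
      ENNReal.ofReal (π ^ ((d : ℝ) / 2) * t ^ (-((d : ℝ) / 2))) := by
  have h := GaussianFourier.integral_rexp_neg_mul_sq_norm (V := EuclideanSpace ℝ (Fin d)) ht
  rw [finrank_euclideanSpace_fin] at h
  have hpos : 0 < (π / t) ^ ((d : ℝ) / 2) := by positivity
  rw [← ofReal_integral_eq_lintegral_ofReal, h]
  · rw [Real.div_rpow (by positivity) ht.le, Real.rpow_neg ht.le]; rfl
  · by_contra hc
    rw [integral_undef hc] at h
    linarith
  · exact Filter.Eventually.of_forall fun z => (Real.exp_pos _).le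

/-- constant -/
noncomputable def fhC (d : ℕ) (s : ℝ) : ℝ :=
  π ^ ((d : ℝ) / 2) * Real.Gamma (s - d / 2) / Real.Gamma s

lemma fh_kernel_lint (d : ℕ) {s h : ℝ} (hs : (d : ℝ) / 2 < s) (hh : h ≠ 0) :
    ∫⁻ z : EuclideanSpace ℝ (Fin d), ENNReal.ofReal ((‖z‖ ^ 2 + h ^ 2) ^ (-s)) =
      ENNReal.ofReal (fhC d s * |h| ^ ((d : ℝ) - 2 * s)) := by
  have hd0 : (0:ℝ) ≤ (d : ℝ) / 2 := by positivity
  have hs0 : 0 < s := lt_of_le_of_lt hd0 hs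
  have hG := Real.Gamma_pos_of_pos hs0
  have hh2 : 0 < h ^ 2 := by positivity
  have step : ∀ z : EuclideanSpace ℝ (Fin d), ENNReal.ofReal ((‖z‖ ^ 2 + h ^ 2) ^ (-s)) =
      ∫⁻ t in Ioi (0:ℝ), ENNReal.ofReal ((Real.Gamma s)⁻¹ * (t ^ (s - 1) * Real.exp (-(h ^ 2 * t)))) *
        ENNReal.ofReal (Real.exp (-t * ‖z‖ ^ 2)) := by
    intro z
    have h1 := fh_gamma_lint hs0 (show 0 < ‖z‖ ^ 2 + h ^ 2 by positivity)
    have h2 : (‖z‖ ^ 2 + h ^ 2) ^ (-s) =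
        (Real.Gamma s)⁻¹ * ((‖z‖ ^ 2 + h ^ 2) ^ (-s) * Real.Gamma s) := by field_simp
    rw [h2, ENNReal.ofReal_mul (by positivity), ← h1, ← lintegral_const_mul' _ _ (by simp)]
    refine setLIntegral_congr_fun measurableSet_Ioi fun t ht => ?_
    have ht0 : 0 < t := ht
    rw [← ENNReal.ofReal_mul (by positivity), ← ENNReal.ofReal_mul (by positivity)]
    congr 1
    have : Real.exp (-((‖z‖ ^ 2 + h ^ 2) * t)) = Real.exp (-(h ^ 2 * t)) * Real.exp (-t * ‖z‖ ^ 2) := by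
      rw [← Real.exp_add]; congr 1; ring
    rw [this]; ring
  simp_rw [step]
  rw [lintegral_lintegral_swap (by fun_prop)]
  have step2 : ∀ t ∈ Ioi (0:ℝ), (∫⁻ z : EuclideanSpace ℝ (Fin d),
      ENNReal.ofReal ((Real.Gamma s)⁻¹ * (t ^ (s - 1) * Real.exp (-(h ^ 2 * t)))) *
        ENNReal.ofReal (Real.exp (-t * ‖z‖ ^ 2))) =
      ENNReal.ofReal ((Real.Gamma s)⁻¹ * π ^ ((d : ℝ) / 2)) *
       ENNReal.ofReal (t ^ ((s - d / 2) - 1) * Real.exp (-(h ^ 2 * t))) := by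
    intro t ht
    have ht0 : 0 < t := ht
    rw [lintegral_const_mul' _ _ (by simp), fh_gauss_lint d ht0,
      ← ENNReal.ofReal_mul (by positivity), ← ENNReal.ofReal_mul (by positivity)]
    congr 1
    have : t ^ ((s - d / 2) - 1) = t ^ (s - 1) * t ^ (-((d : ℝ) / 2)) := by
      rw [← Real.rpow_add ht0]; congr 1; ring
    rw [this]; ring
  rw [setLIntegral_congr_fun measurableSet_Ioi step2, lintegral_const_mul' _ _ (by simp),
    fh_gamma_lint (by linarith) hh2, ← ENNReal.ofReal_mul (by positivity)]
  congr 1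
  have : (h ^ 2) ^ (-(s - d / 2)) = |h| ^ ((d : ℝ) - 2 * s) := by
    rw [← sq_abs, ← Real.rpow_natCast, ← Real.rpow_mul (abs_nonneg _)]
    congr 1; push_cast; ring
  rw [this, fhC]; ring


lemma fh_measD (d : ℕ) : MeasurableSet (halfSpace d) := by
  unfold halfSpace
  exact measurableSet_lt measurable_const (by fun_prop)

/-- the point with horizontal part `z` and height `τ` -/
def fhI {d : ℕ} (z : EuclideanSpace ℝ (Fin d)) (τ : ℝ) : EuclideanSpace ℝ (Fin (d + 1)) :=
  WithLp.toLp 2 ((Fin.last d).insertNth τ (WithLp.ofLp z))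

lemma fhI_last {d : ℕ} (z : EuclideanSpace ℝ (Fin d)) (τ : ℝ) : fhI z τ (Fin.last d) = τ := by
  simp [fhI]

lemma fhI_castSucc {d : ℕ} (z : EuclideanSpace ℝ (Fin d)) (τ : ℝ) (i : Fin d) :
    fhI z τ i.castSucc = z i := by
  have := Fin.insertNth_apply_succAbove (α := fun _ => ℝ) (Fin.last d) τ (WithLp.ofLp z) i
  rw [Fin.succAbove_last] at this
  exact this

/-- the unit vertical vector -/
noncomputable def fhE (d : ℕ) : EuclideanSpace ℝ (Fin (d + 1)) := EuclideanSpace.single (Fin.last d) 1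

lemma fhE_last (d : ℕ) : fhE d (Fin.last d) = 1 := by simp [fhE]

lemma fhI_norm {d : ℕ} (z : EuclideanSpace ℝ (Fin d)) (τ c : ℝ) :
    ‖fhI z τ - c • fhE d‖ ^ 2 = ‖z‖ ^ 2 + (τ - c) ^ 2 := by
  rw [EuclideanSpace.norm_sq_eq, EuclideanSpace.norm_sq_eq, Fin.sum_univ_castSucc]
  simp [fhI_last, fhI_castSucc, fhE, Fin.castSucc_ne_last]

lemma fh_split {d : ℕ} (f : EuclideanSpace ℝ (Fin (d + 1)) → ENNReal) (hf : Measurable f) :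
    ∫⁻ x in halfSpace d, f x = ∫⁻ τ in Ioi (0:ℝ), ∫⁻ z : EuclideanSpace ℝ (Fin d), f (fhI z τ) := by
  have h1 := PiLp.volume_preserving_toLp (Fin (d + 1))
  have h2 := (volume_preserving_piFinSuccAbove (fun _ : Fin (d + 1) => ℝ) (Fin.last d)).symm
  have hF : Measurable ((halfSpace d).indicator f) := hf.indicator (fh_measD d)
  have hF1 : Measurable (fun w : Fin (d + 1) → ℝ => (halfSpace d).indicator f (WithLp.toLp 2 w)) :=
    hF.comp h1.measurable
  rw [← lintegral_indicator (fh_measD d), ← h1.lintegral_comp hF, ← h2.lintegral_comp hF1,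
    Measure.volume_eq_prod, lintegral_prod _ (by
      exact (hF1.comp h2.measurable).aemeasurable),
    ← lintegral_indicator measurableSet_Ioi]
  congr 1
  ext τ
  have h3 := PiLp.volume_preserving_ofLp (Fin d)
  rw [← h3.lintegral_comp (by
    exact (hF1.comp h2.measurable).comp measurable_prodMk_left)]
  by_cases hτ : τ ∈ Ioi (0:ℝ)
  · rw [Set.indicator_of_mem hτ]
    congr 1
    ext z
    have : fhI z τ ∈ halfSpace d := by
      show 0 < fhI z τ (Fin.last d)
      rw [fhI_last]; exact hτ
    exact Set.indicator_of_mem this f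
  · rw [Set.indicator_of_notMem hτ]
    have : ∀ z : EuclideanSpace ℝ (Fin d), (halfSpace d).indicator f (fhI z τ) = 0 := by
      intro z
      apply Set.indicator_of_notMem
      show ¬ (0 < fhI z τ (Fin.last d))
      rw [fhI_last]; exact hτ
    exact (lintegral_congr this).trans lintegral_zero

lemma fh_subst {d : ℕ} (g : EuclideanSpace ℝ (Fin (d + 1)) → ENNReal) (hg : Measurable g)
    (x : EuclideanSpace ℝ (Fin (d + 1))) (hx : x ∈ halfSpace d) :
    ∫⁻ y in halfSpace d, g y = ∫⁻ p in halfSpace d,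
      ENNReal.ofReal (x (Fin.last d) ^ (d + 1)) * g (x + x (Fin.last d) • (p - fhE d)) := by
  set s := x (Fin.last d) with hs
  have hs0 : 0 < s := hx
  have hG : Measurable ((halfSpace d).indicator g) := hg.indicator (fh_measD d)
  have hm := Measure.map_addHaar_smul (volume : Measure (EuclideanSpace ℝ (Fin (d + 1)))) hs0.ne'
  rw [finrank_euclideanSpace_fin, abs_of_pos (by positivity)] at hm
  have key : ∫⁻ p, (halfSpace d).indicator g (x + s • (p - fhE d)) =
      ENNReal.ofReal ((s ^ (d + 1))⁻¹) * ∫⁻ y, (halfSpace d).indicator g y := by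
    have : ∀ p, x + s • (p - fhE d) = s • p + (x - s • fhE d) := by
      intro p; rw [smul_sub]; abel
    simp_rw [this]
    rw [← lintegral_map (μ := volume) (f := fun q => (halfSpace d).indicator g (q + (x - s • fhE d)))
      (g := fun p => s • p) (by fun_prop) (by fun_prop)]
    have hm' : Measure.map (fun p : EuclideanSpace ℝ (Fin (d + 1)) => s • p) volume = _ := hm
    rw [hm', lintegral_smul_measure, lintegral_add_right_eq_self]
    rfl
  rw [lintegral_const_mul' _ _ (by simp), ← lintegral_indicator (fh_measD d),
    ← lintegral_indicator (fh_measD d)]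
  have h2 : ∀ p, (halfSpace d).indicator (fun p => g (x + s • (p - fhE d))) p =
      (halfSpace d).indicator g (x + s • (p - fhE d)) := by
    intro p
    have hiff : x + s • (p - fhE d) ∈ halfSpace d ↔ p ∈ halfSpace d := by
      show 0 < (x + s • (p - fhE d)) (Fin.last d) ↔ 0 < p (Fin.last d)
      have : (x + s • (p - fhE d)) (Fin.last d) = s * p (Fin.last d) := by
        simp [fhE_last, ← hs]; ring
      rw [this]; exact mul_pos_iff_of_pos_left hs0
    by_cases hp : p ∈ halfSpace d
    · rw [Set.indicator_of_mem hp, Set.indicator_of_mem (hiff.mpr hp)]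
    · rw [Set.indicator_of_notMem hp, Set.indicator_of_notMem (fun h => hp (hiff.mp h))]
  rw [lintegral_congr h2, key, ← mul_assoc, ← ENNReal.ofReal_mul (by positivity),
    mul_inv_cancel₀ (by positivity), ENNReal.ofReal_one, one_mul]

lemma fh_invariant {d : ℕ} (g : EuclideanSpace ℝ (Fin (d + 1)) → ENNReal) (hg : Measurable g)
    (p : EuclideanSpace ℝ (Fin (d + 1))) (hp : p ∈ halfSpace d) :
    ∫⁻ x in halfSpace d, ENNReal.ofReal ((x (Fin.last d))⁻¹) *
        g (x + x (Fin.last d) • (p - fhE d)) =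
      ∫⁻ x in halfSpace d, ENNReal.ofReal ((x (Fin.last d))⁻¹) * g x := by
  set τ := p (Fin.last d) with hτ
  have hτ0 : 0 < τ := hp
  set A : EuclideanSpace ℝ (Fin (d + 1)) →ₗ[ℝ] EuclideanSpace ℝ (Fin (d + 1)) :=
    LinearMap.transvection (EuclideanSpace.proj (Fin.last d)).toLinearMap (p - fhE d) with hA
  have hAx : ∀ x, A x = x + x (Fin.last d) • (p - fhE d) := by
    intro x; simp [hA, LinearMap.transvection.apply]
  have hdet : LinearMap.det A = τ := by
    rw [hA, LinearMap.transvection.det]; simp [fhE_last, hτ]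
  have hm := Measure.map_linearMap_addHaar_eq_smul_addHaar
    (volume : Measure (EuclideanSpace ℝ (Fin (d + 1)))) (f := A) (by rw [hdet]; exact hτ0.ne')
  rw [hdet, abs_of_pos (by positivity)] at hm
  set G : EuclideanSpace ℝ (Fin (d + 1)) → ENNReal :=
    (halfSpace d).indicator (fun x => ENNReal.ofReal ((x (Fin.last d))⁻¹) * g x) with hG
  have hGm : Measurable G := Measurable.indicator (by fun_prop) (fh_measD d)
  have key : ∫⁻ x, G (A x) = ENNReal.ofReal τ⁻¹ * ∫⁻ x, G x := by
    rw [← lintegral_map (μ := volume) hGm (by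
      exact (LinearMap.continuous_of_finiteDimensional A).measurable), hm, lintegral_smul_measure]
    rfl
  rw [← lintegral_indicator (fh_measD d), ← lintegral_indicator (fh_measD d), ← hG]
  have h2 : ∀ x, (halfSpace d).indicator (fun x => ENNReal.ofReal ((x (Fin.last d))⁻¹) *
      g (x + x (Fin.last d) • (p - fhE d))) x = ENNReal.ofReal τ * G (A x) := by
    intro x
    have hl : (A x) (Fin.last d) = τ * x (Fin.last d) := by
      rw [hAx]; simp [fhE_last, ← hτ]; ring
    have hiff : A x ∈ halfSpace d ↔ x ∈ halfSpace d := by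
      show 0 < (A x) (Fin.last d) ↔ 0 < x (Fin.last d)
      rw [hl]; exact mul_pos_iff_of_pos_left hτ0
    by_cases hx : x ∈ halfSpace d
    · have hx0 : 0 < x (Fin.last d) := hx
      rw [Set.indicator_of_mem hx, hG, Set.indicator_of_mem (hiff.mpr hx), hl, hAx, ← mul_assoc,
        ← ENNReal.ofReal_mul hτ0.le]
      congr 2
      field_simp
    · rw [Set.indicator_of_notMem hx, hG, Set.indicator_of_notMem (fun h => hx (hiff.mp h)),
        mul_zero]
  rw [lintegral_congr h2, lintegral_const_mul' _ _ (by simp), key, ← mul_assoc,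
    ← ENNReal.ofReal_mul hτ0.le, mul_inv_cancel₀ hτ0.ne', ENNReal.ofReal_one, one_mul]


lemma fh_quad {d : ℕ} (v : EuclideanSpace ℝ (Fin (d + 1)) → ℝ) (hv : Measurable v)
    (hN : ∫⁻ x in halfSpace d, ENNReal.ofReal ((x (Fin.last d))⁻¹) * ENNReal.ofReal (v x ^ 2) ≠ ⊤)
    (p : EuclideanSpace ℝ (Fin (d + 1))) (hp : p ∈ halfSpace d) (c : ℝ) (hc : 0 ≤ c) :
    ∫⁻ x in halfSpace d, ENNReal.ofReal ((x (Fin.last d))⁻¹) *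
        ENNReal.ofReal ((v x - c * v (x + x (Fin.last d) • (p - fhE d))) ^ 2) =
      ENNReal.ofReal ((1 - c) ^ 2) *
        (∫⁻ x in halfSpace d, ENNReal.ofReal ((x (Fin.last d))⁻¹) * ENNReal.ofReal (v x ^ 2)) +
      ENNReal.ofReal c * ∫⁻ x in halfSpace d, ENNReal.ofReal ((x (Fin.last d))⁻¹) *
        ENNReal.ofReal ((v x - v (x + x (Fin.last d) • (p - fhE d))) ^ 2) := by
  have hinv := fh_invariant (fun x => ENNReal.ofReal (v x ^ 2)) (by fun_prop) p hp
  simp only at hinv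
  set N := ∫⁻ x in halfSpace d, ENNReal.ofReal ((x (Fin.last d))⁻¹) * ENNReal.ofReal (v x ^ 2)
    with hNdef
  set μ := volume.restrict (halfSpace d) with hμ
  set m : EuclideanSpace ℝ (Fin (d + 1)) → ENNReal := fun x => ENNReal.ofReal ((x (Fin.last d))⁻¹)
    with hm
  have hmm : Measurable m := by fun_prop
  set w : EuclideanSpace ℝ (Fin (d + 1)) → ℝ := fun x => v (x + x (Fin.last d) • (p - fhE d)) with hw
  have hwm : Measurable w := by fun_prop
  have hN1 : ∫⁻ x, m x * ENNReal.ofReal (w x ^ 2) ∂μ = N := hinv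
  have hN2 : ∫⁻ x, m x * ENNReal.ofReal (v x ^ 2) ∂μ = N := rfl
  set X := ∫⁻ x, m x * ENNReal.ofReal ((v x - c * w x) ^ 2) ∂μ with hX
  set Y := ∫⁻ x, m x * ENNReal.ofReal ((v x - w x) ^ 2) ∂μ with hY
  show X = ENNReal.ofReal ((1 - c) ^ 2) * N + ENNReal.ofReal c * Y
  have hpt : ∀ x, m x * ENNReal.ofReal ((v x - c * w x) ^ 2) +
      (ENNReal.ofReal c * (m x * ENNReal.ofReal (v x ^ 2)) +
        ENNReal.ofReal c * (m x * ENNReal.ofReal (w x ^ 2))) =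
      m x * ENNReal.ofReal (v x ^ 2) + (ENNReal.ofReal (c ^ 2) * (m x * ENNReal.ofReal (w x ^ 2)) +
        ENNReal.ofReal c * (m x * ENNReal.ofReal ((v x - w x) ^ 2))) := by
    intro x
    have : ENNReal.ofReal ((v x - c * w x) ^ 2) +
      (ENNReal.ofReal c * (ENNReal.ofReal (v x ^ 2)) +
        ENNReal.ofReal c * (ENNReal.ofReal (w x ^ 2))) =
      ENNReal.ofReal (v x ^ 2) + (ENNReal.ofReal (c ^ 2) * (ENNReal.ofReal (w x ^ 2)) +
        ENNReal.ofReal c * (ENNReal.ofReal ((v x - w x) ^ 2))) := by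
      rw [← ENNReal.ofReal_mul hc, ← ENNReal.ofReal_mul hc, ← ENNReal.ofReal_mul hc,
        ← ENNReal.ofReal_mul (sq_nonneg c), ← ENNReal.ofReal_add (by positivity) (by positivity),
        ← ENNReal.ofReal_add (by positivity) (by positivity),
        ← ENNReal.ofReal_add (by positivity) (by positivity),
        ← ENNReal.ofReal_add (by positivity) (by positivity)]
      congr 1; ring
    calc _ = m x * (ENNReal.ofReal ((v x - c * w x) ^ 2) +
      (ENNReal.ofReal c * (ENNReal.ofReal (v x ^ 2)) +
        ENNReal.ofReal c * (ENNReal.ofReal (w x ^ 2)))) := by ring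
      _ = _ := by rw [this]; ring
  have hlcongr := lintegral_congr (μ := μ) hpt
  rw [lintegral_add_left (by fun_prop), lintegral_add_left (by fun_prop),
    lintegral_add_left (by fun_prop), lintegral_add_left (by fun_prop),
    lintegral_const_mul' _ _ (by simp), lintegral_const_mul' _ _ (by simp),
    lintegral_const_mul' _ _ (by simp), lintegral_const_mul' _ _ (by simp), hN1, hN2,
    ← hX, ← hY] at hlcongr
  have hfin : ENNReal.ofReal c * N + ENNReal.ofReal c * N ≠ ⊤ := by finiteness
  rw [← ENNReal.add_left_inj hfin, hlcongr]
  have h3 : (1 : ENNReal) + ENNReal.ofReal (c ^ 2) =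
      ENNReal.ofReal ((1 - c) ^ 2) + (ENNReal.ofReal c + ENNReal.ofReal c) := by
    rw [← ENNReal.ofReal_one, ← ENNReal.ofReal_add (by positivity) (by positivity),
      ← ENNReal.ofReal_add (by positivity) (by positivity),
      ← ENNReal.ofReal_add (by positivity) (by positivity)]
    congr 1; ring
  calc N + (ENNReal.ofReal (c ^ 2) * N + ENNReal.ofReal c * Y)
      = (1 + ENNReal.ofReal (c ^ 2)) * N + ENNReal.ofReal c * Y := by ring
    _ = _ := by rw [h3]; ring

lemma fh_energy {d : ℕ} {α : ℝ} (u v : EuclideanSpace ℝ (Fin (d + 1)) → ℝ) (hv : Measurable v)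
    (hu : Measurable u)
    (huv : ∀ x ∈ halfSpace d, u x = x (Fin.last d) ^ ((α - 1) / 2) * v x)
    (hN : ∫⁻ x in halfSpace d, ENNReal.ofReal ((x (Fin.last d))⁻¹) * ENNReal.ofReal (v x ^ 2) ≠ ⊤) :
    ∫⁻ x in halfSpace d, ∫⁻ y in halfSpace d,
        ENNReal.ofReal ((u x - u y) ^ 2 / ‖x - y‖ ^ ((d : ℝ) + 1 + α)) =
      (∫⁻ p in halfSpace d, ENNReal.ofReal (‖p - fhE d‖ ^ (-((d : ℝ) + 1 + α)) *
          (1 - p (Fin.last d) ^ ((α - 1) / 2)) ^ 2)) *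
        (∫⁻ x in halfSpace d, ENNReal.ofReal ((x (Fin.last d))⁻¹) * ENNReal.ofReal (v x ^ 2)) +
      ∫⁻ p in halfSpace d, ENNReal.ofReal (‖p - fhE d‖ ^ (-((d : ℝ) + 1 + α)) *
          p (Fin.last d) ^ ((α - 1) / 2)) *
        ∫⁻ x in halfSpace d, ENNReal.ofReal ((x (Fin.last d))⁻¹) *
          ENNReal.ofReal ((v x - v (x + x (Fin.last d) • (p - fhE d))) ^ 2) := by
  have hpt : ∀ x ∈ halfSpace d, ∀ p ∈ halfSpace d,
      ENNReal.ofReal (x (Fin.last d) ^ (d + 1)) *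
        ENNReal.ofReal ((u x - u (x + x (Fin.last d) • (p - fhE d))) ^ 2 /
          ‖x - (x + x (Fin.last d) • (p - fhE d))‖ ^ ((d : ℝ) + 1 + α)) =
      ENNReal.ofReal (‖p - fhE d‖ ^ (-((d : ℝ) + 1 + α))) * (ENNReal.ofReal ((x (Fin.last d))⁻¹) *
        ENNReal.ofReal ((v x - p (Fin.last d) ^ ((α - 1) / 2) *
          v (x + x (Fin.last d) • (p - fhE d))) ^ 2)) := by
    intro x hx p hp
    have hx0 : 0 < x (Fin.last d) := hx
    have hp0 : 0 < p (Fin.last d) := hp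
    set y := x + x (Fin.last d) • (p - fhE d) with hy
    have hyl : y (Fin.last d) = x (Fin.last d) * p (Fin.last d) := by
      rw [hy]; simp [fhE_last]; ring
    have hyD : y ∈ halfSpace d := by
      show 0 < y (Fin.last d)
      rw [hyl]; positivity
    have hn : ‖x - y‖ = x (Fin.last d) * ‖p - fhE d‖ := by
      rw [hy, sub_add_cancel_left, norm_neg, norm_smul, Real.norm_of_nonneg hx0.le]
    rw [huv x hx, huv y hyD, hyl, hn]
    rw [← ENNReal.ofReal_mul (by positivity), ← ENNReal.ofReal_mul (by positivity),
      ← ENNReal.ofReal_mul (by positivity)]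
    congr 1
    set s := x (Fin.last d)
    rw [Real.mul_rpow hx0.le hp0.le, Real.mul_rpow hx0.le (norm_nonneg _),
      Real.rpow_neg (norm_nonneg _)]
    have hs : s ^ ((d : ℝ) + 1 + α) = s ^ (d + 1) * s * (s ^ ((α - 1) / 2)) ^ 2 := by
      rw [← pow_succ, ← Real.rpow_natCast, ← Real.rpow_natCast, ← Real.rpow_mul hx0.le,
        ← Real.rpow_add hx0]
      congr 1; push_cast; ring
    rw [hs]
    have hb : 0 < s ^ ((α - 1) / 2) := by positivity
    rw [div_eq_mul_inv, mul_inv]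
    have : ∀ A B : ℝ, (s ^ ((α - 1) / 2) * A - s ^ ((α - 1) / 2) * p (Fin.last d) ^ ((α - 1) / 2) * B) ^ 2
      = (s ^ ((α - 1) / 2)) ^ 2 * (A - p (Fin.last d) ^ ((α - 1) / 2) * B) ^ 2 := by
      intro A B; ring
    rw [this]
    field_simp
  have h1 : ∀ x ∈ halfSpace d, (∫⁻ y in halfSpace d,
        ENNReal.ofReal ((u x - u y) ^ 2 / ‖x - y‖ ^ ((d : ℝ) + 1 + α))) =
      ∫⁻ p in halfSpace d, ENNReal.ofReal (‖p - fhE d‖ ^ (-((d : ℝ) + 1 + α))) *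
        (ENNReal.ofReal ((x (Fin.last d))⁻¹) *
        ENNReal.ofReal ((v x - p (Fin.last d) ^ ((α - 1) / 2) *
          v (x + x (Fin.last d) • (p - fhE d))) ^ 2)) := by
    intro x hx
    rw [fh_subst _ (by fun_prop) x hx]
    exact setLIntegral_congr_fun (fh_measD d) (fun p hp => hpt x hx p hp)
  rw [setLIntegral_congr_fun (fh_measD d) h1, lintegral_lintegral_swap (by fun_prop)]
  have h2 : ∀ p ∈ halfSpace d, (∫⁻ x in halfSpace d,
      ENNReal.ofReal (‖p - fhE d‖ ^ (-((d : ℝ) + 1 + α))) *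
        (ENNReal.ofReal ((x (Fin.last d))⁻¹) *
        ENNReal.ofReal ((v x - p (Fin.last d) ^ ((α - 1) / 2) *
          v (x + x (Fin.last d) • (p - fhE d))) ^ 2))) =
      ENNReal.ofReal (‖p - fhE d‖ ^ (-((d : ℝ) + 1 + α)) *
          (1 - p (Fin.last d) ^ ((α - 1) / 2)) ^ 2) *
        (∫⁻ x in halfSpace d, ENNReal.ofReal ((x (Fin.last d))⁻¹) * ENNReal.ofReal (v x ^ 2)) +
      ENNReal.ofReal (‖p - fhE d‖ ^ (-((d : ℝ) + 1 + α)) *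
          p (Fin.last d) ^ ((α - 1) / 2)) *
        ∫⁻ x in halfSpace d, ENNReal.ofReal ((x (Fin.last d))⁻¹) *
          ENNReal.ofReal ((v x - v (x + x (Fin.last d) • (p - fhE d))) ^ 2) := by
    intro p hp
    have hp0 : 0 < p (Fin.last d) := hp
    rw [lintegral_const_mul' _ _ (by simp), fh_quad v hv hN p hp _ (by positivity), mul_add,
      ← mul_assoc, ← mul_assoc, ← ENNReal.ofReal_mul (by positivity),
      ← ENNReal.ofReal_mul (by positivity)]
  rw [setLIntegral_congr_fun (fh_measD d) h2, lintegral_add_left (by fun_prop),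
    lintegral_mul_const _ (by fun_prop)]

lemma fh_normpow {d : ℕ} (z : EuclideanSpace ℝ (Fin d)) (τ q : ℝ) :
    ‖fhI z τ - fhE d‖ ^ (-q) = (‖z‖ ^ 2 + (τ - 1) ^ 2) ^ (-(q / 2)) := by
  have := fhI_norm z τ 1
  rw [one_smul] at this
  rw [← this, ← Real.rpow_natCast, ← Real.rpow_mul (norm_nonneg _)]
  congr 1; push_cast; ring

/-- integrating out horizontal variables -/
lemma fh_split_kernel {d : ℕ} {q : ℝ} (hq : (d : ℝ) < q) (g : ℝ → ℝ) (hg : Measurable g)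
    (hg0 : ∀ τ, 0 < τ → 0 ≤ g τ) :
    ∫⁻ p in halfSpace d, ENNReal.ofReal (‖p - fhE d‖ ^ (-q) * g (p (Fin.last d))) =
      ENNReal.ofReal (fhC d (q / 2)) *
        ∫⁻ τ in Ioi (0:ℝ), ENNReal.ofReal (g τ * |τ - 1| ^ ((d : ℝ) - q)) := by
  rw [fh_split _ (by fun_prop), ← lintegral_const_mul' _ _ (by simp)]
  refine setLIntegral_congr_fun_ae measurableSet_Ioi ?_
  have hne : ∀ᵐ τ : ℝ, τ ≠ 1 := by
    simp [ae_iff]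
  filter_upwards [hne] with τ hτ1 hτ
  have hτ0 : 0 < τ := hτ
  have hg' := hg0 τ hτ0
  have hC : 0 ≤ fhC d (q / 2) := by
    unfold fhC
    have hd : (0:ℝ) ≤ d := by positivity
    have := Real.Gamma_pos_of_pos (show 0 < q / 2 - d / 2 by linarith)
    have := Real.Gamma_pos_of_pos (show 0 < q / 2 by linarith)
    positivity
  have : ∀ z : EuclideanSpace ℝ (Fin d), ENNReal.ofReal (‖fhI z τ - fhE d‖ ^ (-q) *
      g (fhI z τ (Fin.last d))) =
      ENNReal.ofReal (g τ) * ENNReal.ofReal ((‖z‖ ^ 2 + (τ - 1) ^ 2) ^ (-(q / 2))) := by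
    intro z
    rw [fhI_last, fh_normpow, ← ENNReal.ofReal_mul hg', mul_comm]
  rw [lintegral_congr this, lintegral_const_mul' _ _ (by simp),
    fh_kernel_lint d (by linarith) (sub_ne_zero.mpr hτ1), ← ENNReal.ofReal_mul hg',
    ← ENNReal.ofReal_mul hC]
  congr 1
  rw [show (d : ℝ) - 2 * (q / 2) = d - q by ring]; ring

lemma fh_const {d : ℕ} {α : ℝ} (hα0 : 0 < α) (hα2 : α < 2) :
    ∫⁻ p in halfSpace d, ENNReal.ofReal (‖p - fhE d‖ ^ (-((d : ℝ) + 1 + α)) *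
          (1 - p (Fin.last d) ^ ((α - 1) / 2)) ^ 2) = ENNReal.ofReal (2 * kappa (d + 1) α) := by
  have := fh_split_kernel (d := d) (q := (d : ℝ) + 1 + α) (by linarith)
    (fun τ => (1 - τ ^ ((α - 1) / 2)) ^ 2) (by fun_prop) (fun τ _ => sq_nonneg _)
  simp only at this
  rw [this, show (d : ℝ) - (d + 1 + α) = -1 - α by ring, fh_halfline hα0 hα2,
    ← ENNReal.ofReal_mul]
  · congr 1
    unfold fhC kappa
    push_cast
    rw [show ((d : ℝ) + 1 + α) / 2 - d / 2 = (1 + α) / 2 by ring,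
      show α + ((d : ℝ) + 1) = d + 1 + α by ring, show (d : ℝ) + 1 - 1 = d by ring]
    ring
  · unfold fhC
    have := Real.Gamma_pos_of_pos (show 0 < ((d : ℝ) + 1 + α) / 2 - d / 2 by linarith)
    have := Real.Gamma_pos_of_pos (show 0 < ((d : ℝ) + 1 + α) / 2 by positivity)
    positivity

/-- horizontal part of a point -/
noncomputable def fhP {d : ℕ} (x : EuclideanSpace ℝ (Fin (d + 1))) : EuclideanSpace ℝ (Fin (d + 1)) :=
  x - x (Fin.last d) • fhE d

lemma fhP_cont {d : ℕ} : Continuous (fhP (d := d)) := by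
  unfold fhP
  fun_prop

lemma fhP_I {d : ℕ} (z : EuclideanSpace ℝ (Fin d)) (τ : ℝ) : ‖fhP (fhI z τ)‖ = ‖z‖ := by
  have h := fhI_norm z τ τ
  unfold fhP
  rw [fhI_last]
  rw [sub_self, zero_pow two_ne_zero, add_zero] at h
  exact (sq_eq_sq₀ (norm_nonneg _) (norm_nonneg _)).mp h

/-- box in logarithmic coordinates -/
def fhS (d : ℕ) (r t : ℝ) : Set (EuclideanSpace ℝ (Fin (d + 1))) :=
  {x | ‖fhP x‖ ≤ r ∧ |Real.log (x (Fin.last d))| ≤ t}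

lemma fhS_meas (d : ℕ) (r t : ℝ) : MeasurableSet (fhS d r t) := by
  have h1 : Measurable (fhP (d := d)) := fhP_cont.measurable
  have h2 : MeasurableSet {x : EuclideanSpace ℝ (Fin (d + 1)) | ‖fhP x‖ ≤ r} :=
    measurableSet_le (by fun_prop) measurable_const
  have h3 : MeasurableSet {x : EuclideanSpace ℝ (Fin (d + 1)) | |Real.log (x (Fin.last d))| ≤ t} :=
    measurableSet_le (by
      exact (continuous_abs.measurable).comp (Real.measurable_log.comp (by fun_prop))) measurable_const
  exact h2.inter h3

lemma fh_log_lint {t : ℝ} (ht : 0 ≤ t) :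
    ∫⁻ τ in Ioi (0:ℝ), ENNReal.ofReal τ⁻¹ * ({τ : ℝ | |Real.log τ| ≤ t}.indicator 1 τ) =
      ENNReal.ofReal (2 * t) := by
  have h0 : ∀ τ ∈ Ioi (0:ℝ), ENNReal.ofReal τ⁻¹ * ({τ : ℝ | |Real.log τ| ≤ t}.indicator 1 τ) =
      (Icc (Real.exp (-t)) (Real.exp t)).indicator (fun τ => ENNReal.ofReal τ⁻¹) τ := by
    intro τ hτ
    have hτ0 : 0 < τ := hτ
    have hiff : τ ∈ {τ : ℝ | |Real.log τ| ≤ t} ↔ τ ∈ Icc (Real.exp (-t)) (Real.exp t) := by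
      rw [mem_ofPred_eq, abs_le, mem_Icc, Real.le_log_iff_exp_le hτ0, Real.log_le_iff_le_exp hτ0]
    by_cases h : τ ∈ Icc (Real.exp (-t)) (Real.exp t)
    · rw [indicator_of_mem h, indicator_of_mem (hiff.mpr h)]; simp
    · rw [indicator_of_notMem h, indicator_of_notMem (fun h' => h (hiff.mp h'))]; simp
  have hle : Real.exp (-t) ≤ Real.exp t := Real.exp_le_exp.mpr (by linarith)
  rw [setLIntegral_congr_fun measurableSet_Ioi h0, lintegral_indicator measurableSet_Icc,
    Measure.restrict_restrict measurableSet_Icc]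
  have hsub : Icc (Real.exp (-t)) (Real.exp t) ∩ Ioi 0 = Icc (Real.exp (-t)) (Real.exp t) := by
    apply inter_eq_left.mpr
    intro τ hτ
    exact lt_of_lt_of_le (Real.exp_pos _) hτ.1
  rw [hsub, ← ofReal_integral_eq_lintegral_ofReal]
  · rw [integral_Icc_eq_integral_Ioc, ← intervalIntegral.integral_of_le hle,
      integral_inv_of_pos (Real.exp_pos _) (Real.exp_pos _), ← Real.exp_sub, Real.log_exp]
    congr 1; ring
  · apply ContinuousOn.integrableOn_Icc
    intro τ hτ
    exact (continuousAt_inv₀ (lt_of_lt_of_le (Real.exp_pos _) hτ.1).ne').continuousWithinAt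
  · filter_upwards [ae_restrict_mem measurableSet_Icc] with τ hτ
    exact inv_nonneg.mpr (le_trans (Real.exp_pos _).le hτ.1)

lemma fhS_vol (d : ℕ) {r t : ℝ} (hr : 0 ≤ r) (ht : 0 ≤ t) :
    ∫⁻ x in halfSpace d, ENNReal.ofReal ((x (Fin.last d))⁻¹) * (fhS d r t).indicator 1 x =
      ENNReal.ofReal (r ^ d * (2 * t)) *
        volume (Metric.closedBall (0 : EuclideanSpace ℝ (Fin d)) 1) := by
  have hm : Measurable ((fhS d r t).indicator (1 : EuclideanSpace ℝ (Fin (d + 1)) → ENNReal)) :=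
    measurable_one.indicator (fhS_meas d r t)
  rw [fh_split _ (by fun_prop)]
  have h1 : ∀ τ : ℝ, ∫⁻ z : EuclideanSpace ℝ (Fin d), ENNReal.ofReal ((fhI z τ (Fin.last d))⁻¹) *
      (fhS d r t).indicator 1 (fhI z τ) =
      (ENNReal.ofReal τ⁻¹ * ({τ : ℝ | |Real.log τ| ≤ t}.indicator 1 τ)) *
        volume (Metric.closedBall (0 : EuclideanSpace ℝ (Fin d)) r) := by
    intro τ
    have h2 : ∀ z : EuclideanSpace ℝ (Fin d), ENNReal.ofReal ((fhI z τ (Fin.last d))⁻¹) *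
      (fhS d r t).indicator 1 (fhI z τ) =
      (ENNReal.ofReal τ⁻¹ * ({τ : ℝ | |Real.log τ| ≤ t}.indicator 1 τ)) *
       (Metric.closedBall (0 : EuclideanSpace ℝ (Fin d)) r).indicator 1 z := by
      intro z
      rw [fhI_last, mul_assoc]
      congr 1
      simp only [indicator, fhS, mem_ofPred_eq, fhP_I, fhI_last, mem_closedBall_zero_iff, Pi.one_apply]
      by_cases ha : ‖z‖ ≤ r <;> by_cases hb : |Real.log τ| ≤ t <;> simp [ha, hb]
    rw [lintegral_congr h2, lintegral_const_mul _ (measurable_one.indicator measurableSet_closedBall),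
      lintegral_indicator_one measurableSet_closedBall]
  simp_rw [h1]
  have hfin : volume (Metric.closedBall (0 : EuclideanSpace ℝ (Fin d)) r) ≠ ⊤ :=
    measure_closedBall_lt_top.ne
  rw [lintegral_mul_const' _ _ hfin, fh_log_lint ht, Measure.addHaar_closedBall' _ _ hr,
    finrank_euclideanSpace_fin, ← mul_assoc, ← ENNReal.ofReal_mul (by positivity), mul_comm (2 * t)]

/-- the cutoff functions -/
noncomputable def fhv (d : ℕ) (n : ℝ) (x : EuclideanSpace ℝ (Fin (d + 1))) : ℝ :=
  max 0 (1 - ‖fhP x‖ / (n * Real.exp n) - |Real.log (x (Fin.last d))| / n)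

lemma fhv_meas (d : ℕ) (n : ℝ) : Measurable (fhv d n) := by
  have h1 : Measurable (fhP (d := d)) := fhP_cont.measurable
  have h3 : Measurable (fun x : EuclideanSpace ℝ (Fin (d + 1)) => |Real.log (x (Fin.last d))|) :=
      (continuous_abs.measurable).comp (Real.measurable_log.comp (by fun_prop))
  unfold fhv
  fun_prop

lemma fhv_zero {d : ℕ} {n : ℝ} (hn : 0 < n) {x : EuclideanSpace ℝ (Fin (d + 1))}
    (hx : x ∉ fhS d (n * Real.exp n) n) : fhv d n x = 0 := by
  have hR : 0 < n * Real.exp n := by positivity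
  unfold fhv
  apply max_eq_left
  have h1 : 0 ≤ ‖fhP x‖ / (n * Real.exp n) := by positivity
  have h2 : 0 ≤ |Real.log (x (Fin.last d))| / n := by positivity
  by_cases h : ‖fhP x‖ ≤ n * Real.exp n
  · have h3 : n < |Real.log (x (Fin.last d))| := by
      by_contra h4
      exact hx ⟨h, not_lt.mp h4⟩
    have : 1 < |Real.log (x (Fin.last d))| / n := by rwa [lt_div_iff₀ hn, one_mul]
    linarith
  · have : 1 < ‖fhP x‖ / (n * Real.exp n) := by rw [lt_div_iff₀ hR, one_mul]; exact not_le.mp h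
    linarith

lemma fhv_le_one {d : ℕ} {n : ℝ} (hn : 0 < n) (x : EuclideanSpace ℝ (Fin (d + 1))) :
    fhv d n x ≤ 1 := by
  have h1 : 0 ≤ ‖fhP x‖ / (n * Real.exp n) := by positivity
  have h2 : 0 ≤ |Real.log (x (Fin.last d))| / n := by positivity
  exact max_le zero_le_one (by linarith)

lemma fhv_nonneg {d : ℕ} {n : ℝ} (x : EuclideanSpace ℝ (Fin (d + 1))) :
    0 ≤ fhv d n x := le_max_left _ _

lemma fhv_half {d : ℕ} {n : ℝ} (hn : 0 < n) {x : EuclideanSpace ℝ (Fin (d + 1))}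
    (hx : x ∈ fhS d (n * Real.exp n / 4) (n / 4)) : 1 / 2 ≤ fhv d n x := by
  have hR : 0 < n * Real.exp n := by positivity
  refine le_trans ?_ (le_max_right _ _)
  have h1 : ‖fhP x‖ / (n * Real.exp n) ≤ 1 / 4 := by
    rw [div_le_iff₀ hR]; linarith [hx.1]
  have h2 : |Real.log (x (Fin.last d))| / n ≤ 1 / 4 := by
    rw [div_le_iff₀ hn]; linarith [hx.2]
  linarith

/-- the weighted mass -/
noncomputable def fhN (d : ℕ) (n : ℝ) : ENNReal :=
  ∫⁻ x in halfSpace d, ENNReal.ofReal ((x (Fin.last d))⁻¹) * ENNReal.ofReal (fhv d n x ^ 2)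

lemma fhN_upper {d : ℕ} {n : ℝ} (hn : 0 < n) : fhN d n ≤
    ∫⁻ x in halfSpace d, ENNReal.ofReal ((x (Fin.last d))⁻¹) *
      (fhS d (n * Real.exp n) n).indicator 1 x := by
  apply lintegral_mono
  intro x
  dsimp only
  gcongr
  by_cases hx : x ∈ fhS d (n * Real.exp n) n
  · rw [indicator_of_mem hx, Pi.one_apply, ← ENNReal.ofReal_one]
    apply ENNReal.ofReal_le_ofReal
    exact pow_le_one₀ (fhv_nonneg x) (fhv_le_one hn x)
  · rw [fhv_zero hn hx]; simp

lemma fhN_top {d : ℕ} {n : ℝ} (hn : 0 < n) : fhN d n ≠ ⊤ := by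
  refine ne_top_of_le_ne_top ?_ (fhN_upper hn)
  rw [fhS_vol d (by positivity) hn.le]
  exact ENNReal.mul_ne_top (by simp) measure_closedBall_lt_top.ne

lemma fhN_lower {d : ℕ} {n : ℝ} (hn : 0 < n) :
    ∫⁻ x in halfSpace d, ENNReal.ofReal ((x (Fin.last d))⁻¹) *
      (fhS d (n * Real.exp n) n).indicator 1 x ≤ ENNReal.ofReal (4 ^ (d + 2)) * fhN d n := by
  have h1 : ENNReal.ofReal (1 / 4) * ∫⁻ x in halfSpace d, ENNReal.ofReal ((x (Fin.last d))⁻¹) *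
      (fhS d (n * Real.exp n / 4) (n / 4)).indicator 1 x ≤ fhN d n := by
    rw [← lintegral_const_mul' _ _ (by simp)]
    apply lintegral_mono
    intro x
    dsimp only
    rw [mul_left_comm]
    gcongr
    by_cases hx : x ∈ fhS d (n * Real.exp n / 4) (n / 4)
    · rw [indicator_of_mem hx, Pi.one_apply, mul_one]
      apply ENNReal.ofReal_le_ofReal
      nlinarith [fhv_half hn hx]
    · rw [indicator_of_notMem hx]; simp
  refine le_trans ?_ (mul_le_mul_right h1 _)
  rw [fhS_vol d (by positivity) hn.le, fhS_vol d (by positivity) (by positivity),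
    ← mul_assoc (ENNReal.ofReal (4 ^ (d + 2))), ← ENNReal.ofReal_mul (by positivity),
    ← mul_assoc (ENNReal.ofReal _) (ENNReal.ofReal _), ← ENNReal.ofReal_mul (by positivity)]
  apply le_of_eq
  congr 2
  rw [div_pow, pow_add]
  field_simp

lemma fhN_pos {d : ℕ} {n : ℝ} (hn : 0 < n) : fhN d n ≠ 0 := by
  intro h
  have := fhN_lower (d := d) hn
  rw [h, mul_zero, fhS_vol d (by positivity) hn.le, nonpos_iff_eq_zero, mul_eq_zero] at this
  rcases this with h | h
  · rw [ENNReal.ofReal_eq_zero] at h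
    have : 0 < (n * Real.exp n) ^ d * (2 * n) := by positivity
    linarith
  · exact (Metric.measure_closedBall_pos _ _ one_pos).ne' h

lemma fhP_le {d : ℕ} (p : EuclideanSpace ℝ (Fin (d + 1))) : ‖fhP p‖ ≤ ‖p - fhE d‖ := by
  apply (sq_le_sq₀ (norm_nonneg _) (norm_nonneg _)).mp
  rw [EuclideanSpace.norm_sq_eq, EuclideanSpace.norm_sq_eq, Fin.sum_univ_castSucc,
    Fin.sum_univ_castSucc]
  simp [fhP, fhE, Fin.castSucc_ne_last]
  positivity

/-- Lipschitz bound of the cutoff -/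
lemma fhv_lip {d : ℕ} {n : ℝ} (hn : 0 < n) (x p : EuclideanSpace ℝ (Fin (d + 1)))
    (hx : x ∈ halfSpace d) (hp : p ∈ halfSpace d) :
    |fhv d n x - fhv d n (x + x (Fin.last d) • (p - fhE d))| ≤
      x (Fin.last d) * ‖p - fhE d‖ / (n * Real.exp n) + |Real.log (p (Fin.last d))| / n := by
  have hx0 : 0 < x (Fin.last d) := hx
  have hp0 : 0 < p (Fin.last d) := hp
  have hR : 0 < n * Real.exp n := by positivity
  have hl : (x + x (Fin.last d) • (p - fhE d)) (Fin.last d) = x (Fin.last d) * p (Fin.last d) := by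
    simp [fhE_last]; ring
  have hP : fhP (x + x (Fin.last d) • (p - fhE d)) = fhP x + x (Fin.last d) • fhP p := by
    unfold fhP
    rw [hl]
    module
  unfold fhv
  rw [hl, hP, Real.log_mul hx0.ne' hp0.ne', max_comm 0, max_comm 0]
  refine (abs_max_sub_max_le_abs _ _ _).trans ?_
  have h1 : |‖fhP x + x (Fin.last d) • fhP p‖ - ‖fhP x‖| ≤ x (Fin.last d) * ‖p - fhE d‖ := by
    refine (abs_norm_sub_norm_le _ _).trans ?_
    rw [add_sub_cancel_left, norm_smul, Real.norm_of_nonneg hx0.le]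
    exact mul_le_mul_of_nonneg_left (fhP_le p) hx0.le
  have h2 : |(|Real.log (x (Fin.last d)) + Real.log (p (Fin.last d))| - |Real.log (x (Fin.last d))|)|
      ≤ |Real.log (p (Fin.last d))| := by
    refine (abs_abs_sub_abs_le _ _).trans ?_
    rw [add_sub_cancel_left]
  have e : 1 - ‖fhP x‖ / (n * Real.exp n) - |Real.log (x (Fin.last d))| / n -
      (1 - ‖fhP x + x (Fin.last d) • fhP p‖ / (n * Real.exp n) -
        |Real.log (x (Fin.last d)) + Real.log (p (Fin.last d))| / n) =
      (‖fhP x + x (Fin.last d) • fhP p‖ - ‖fhP x‖) / (n * Real.exp n) +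
      (|Real.log (x (Fin.last d)) + Real.log (p (Fin.last d))| - |Real.log (x (Fin.last d))|) / n := by
    ring
  rw [e]
  refine (abs_add_le _ _).trans ?_
  rw [abs_div, abs_div, abs_of_pos hR, abs_of_pos hn]
  gcongr

/-- the modulus -/
noncomputable def fhL {d : ℕ} (p : EuclideanSpace ℝ (Fin (d + 1))) : ℝ :=
  ‖p - fhE d‖ * (1 + 1 / p (Fin.last d)) + |Real.log (p (Fin.last d))|

lemma fhv_pt {d : ℕ} {n : ℝ} (hn : 0 < n) (x p : EuclideanSpace ℝ (Fin (d + 1)))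
    (hx : x ∈ halfSpace d) (hp : p ∈ halfSpace d) :
    ENNReal.ofReal ((fhv d n x - fhv d n (x + x (Fin.last d) • (p - fhE d))) ^ 2) ≤
      ENNReal.ofReal ((fhL p / n) ^ 2) * ((fhS d (n * Real.exp n) n).indicator 1 x +
       (fhS d (n * Real.exp n) n).indicator 1 (x + x (Fin.last d) • (p - fhE d))) := by
  have hx0 : 0 < x (Fin.last d) := hx
  have hp0 : 0 < p (Fin.last d) := hp
  have hl : (x + x (Fin.last d) • (p - fhE d)) (Fin.last d) = x (Fin.last d) * p (Fin.last d) := by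
    simp [fhE_last]; ring
  have key : x (Fin.last d) ≤ Real.exp n * (1 + 1 / p (Fin.last d)) →
      ENNReal.ofReal ((fhv d n x - fhv d n (x + x (Fin.last d) • (p - fhE d))) ^ 2) ≤
      ENNReal.ofReal ((fhL p / n) ^ 2) := by
    intro h
    apply ENNReal.ofReal_le_ofReal
    rw [← sq_abs]
    apply pow_le_pow_left₀ (abs_nonneg _)
    refine (fhv_lip hn x p hx hp).trans ?_
    have : x (Fin.last d) * ‖p - fhE d‖ / (n * Real.exp n) ≤
       (Real.exp n * (1 + 1 / p (Fin.last d))) * ‖p - fhE d‖ / (n * Real.exp n) := by gcongr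
    refine (add_le_add_left this _).trans (le_of_eq ?_)
    unfold fhL
    field_simp
  have hτ : 0 < 1 / p (Fin.last d) := by positivity
  have hen := Real.exp_pos n
  by_cases h1 : x ∈ fhS d (n * Real.exp n) n
  · rw [indicator_of_mem h1]
    have h : x (Fin.last d) ≤ Real.exp n := by
      rw [← Real.log_le_iff_le_exp hx0]; exact (abs_le.mp h1.2).2
    refine (key (by nlinarith [mul_pos hen hτ])).trans ?_
    rw [mul_add, Pi.one_apply, mul_one]
    exact le_self_add
  · by_cases h2 : (x + x (Fin.last d) • (p - fhE d)) ∈ fhS d (n * Real.exp n) n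
    · rw [indicator_of_mem h2]
      have h : x (Fin.last d) ≤ Real.exp n * (1 / p (Fin.last d)) := by
        rw [mul_one_div, le_div_iff₀ hp0, ← Real.log_le_iff_le_exp (by positivity), ← hl]
        exact (abs_le.mp h2.2).2
      refine (key (by nlinarith)).trans ?_
      rw [mul_add, Pi.one_apply, mul_one]
      exact le_add_self
    · rw [fhv_zero hn h1, fhv_zero hn h2]; simp

lemma fhY_bound {d : ℕ} {n : ℝ} (hn : 0 < n) (p : EuclideanSpace ℝ (Fin (d + 1)))
    (hp : p ∈ halfSpace d) :
    ∫⁻ x in halfSpace d, ENNReal.ofReal ((x (Fin.last d))⁻¹) *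
        ENNReal.ofReal ((fhv d n x - fhv d n (x + x (Fin.last d) • (p - fhE d))) ^ 2) ≤
      ENNReal.ofReal (min 4 (2 * 4 ^ (d + 2) * (fhL p / n) ^ 2)) * fhN d n := by
  have hv := fhv_meas d n
  have b1 : ∫⁻ x in halfSpace d, ENNReal.ofReal ((x (Fin.last d))⁻¹) *
        ENNReal.ofReal ((fhv d n x - fhv d n (x + x (Fin.last d) • (p - fhE d))) ^ 2) ≤
      ENNReal.ofReal 4 * fhN d n := by
    have hinv := fh_invariant (fun x => ENNReal.ofReal (fhv d n x ^ 2)) (by fun_prop) p hp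
    simp only at hinv
    have : ENNReal.ofReal 4 * fhN d n = ∫⁻ x in halfSpace d,
        (ENNReal.ofReal 2 * (ENNReal.ofReal ((x (Fin.last d))⁻¹) * ENNReal.ofReal (fhv d n x ^ 2)) +
        ENNReal.ofReal 2 * (ENNReal.ofReal ((x (Fin.last d))⁻¹) *
          ENNReal.ofReal (fhv d n (x + x (Fin.last d) • (p - fhE d)) ^ 2))) := by
      rw [lintegral_add_left (by fun_prop), lintegral_const_mul' _ _ (by simp),
        lintegral_const_mul' _ _ (by simp), hinv, ← add_mul, ← ENNReal.ofReal_add (by norm_num)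
        (by norm_num)]
      norm_num [fhN]
    rw [this]
    apply lintegral_mono
    intro x
    dsimp only
    rw [mul_left_comm, mul_left_comm (ENNReal.ofReal 2), ← mul_add]
    gcongr
    rw [← ENNReal.ofReal_mul (by norm_num), ← ENNReal.ofReal_mul (by norm_num),
      ← ENNReal.ofReal_add (by positivity) (by positivity)]
    apply ENNReal.ofReal_le_ofReal
    nlinarith [sq_nonneg (fhv d n x + fhv d n (x + x (Fin.last d) • (p - fhE d)))]
  have b2 : ∫⁻ x in halfSpace d, ENNReal.ofReal ((x (Fin.last d))⁻¹) *
        ENNReal.ofReal ((fhv d n x - fhv d n (x + x (Fin.last d) • (p - fhE d))) ^ 2) ≤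
      ENNReal.ofReal (2 * 4 ^ (d + 2) * (fhL p / n) ^ 2) * fhN d n := by
    have hm : Measurable ((fhS d (n * Real.exp n) n).indicator
        (1 : EuclideanSpace ℝ (Fin (d + 1)) → ENNReal)) :=
      measurable_one.indicator (fhS_meas d _ _)
    have hinv := fh_invariant _ hm p hp
    calc _ ≤ ∫⁻ x in halfSpace d, ENNReal.ofReal ((fhL p / n) ^ 2) *
          (ENNReal.ofReal ((x (Fin.last d))⁻¹) * (fhS d (n * Real.exp n) n).indicator 1 x +
          ENNReal.ofReal ((x (Fin.last d))⁻¹) *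
            (fhS d (n * Real.exp n) n).indicator 1 (x + x (Fin.last d) • (p - fhE d))) := by
          refine setLIntegral_mono' (fh_measD d) ?_
          intro x hx
          rw [← mul_add, mul_left_comm]
          gcongr
          exact fhv_pt hn x p hx hp
      _ = ENNReal.ofReal ((fhL p / n) ^ 2) * (ENNReal.ofReal 2 *
          ∫⁻ x in halfSpace d, ENNReal.ofReal ((x (Fin.last d))⁻¹) *
            (fhS d (n * Real.exp n) n).indicator 1 x) := by
          rw [lintegral_const_mul' _ _ (by simp), lintegral_add_left (by fun_prop), hinv]
          congr 1
          rw [show ENNReal.ofReal 2 = 2 by simp, two_mul]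
      _ ≤ ENNReal.ofReal ((fhL p / n) ^ 2) * (ENNReal.ofReal 2 *
          (ENNReal.ofReal (4 ^ (d + 2)) * fhN d n)) := by
          gcongr
          exact fhN_lower hn
      _ = _ := by
          rw [← mul_assoc (ENNReal.ofReal 2), ← ENNReal.ofReal_mul (by norm_num), ← mul_assoc,
            ← ENNReal.ofReal_mul (by positivity)]
          congr 2; ring
  rcases le_total (4:ℝ) (2 * 4 ^ (d + 2) * (fhL p / n) ^ 2) with h | h
  · rw [min_eq_left h]; exact b1
  · rw [min_eq_right h]; exact b2

lemma fh_lint_fin {s : Set ℝ} (hs : MeasurableSet s) {h H : ℝ → ℝ} (hH : IntegrableOn H s)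
    (hle : ∀ τ ∈ s, h τ ≤ H τ) : ∫⁻ τ in s, ENNReal.ofReal (h τ) ≠ ⊤ := by
  have h1 := hH.lintegral_lt_top
  refine ne_top_of_le_ne_top h1.ne (setLIntegral_mono' hs ?_)
  intro τ hτ
  exact ENNReal.ofReal_le_ofReal (hle τ hτ)

lemma fh_lint_cover {h : ℝ → ENNReal}
    (h1 : ∫⁻ τ in Ioc (0:ℝ) (1 / 2), h τ ≠ ⊤) (h2 : ∫⁻ τ in Ioc (1 / 2 : ℝ) (3 / 2), h τ ≠ ⊤)
    (h3 : ∫⁻ τ in Ioi (3 / 2 : ℝ), h τ ≠ ⊤) : ∫⁻ τ in Ioi (0:ℝ), h τ ≠ ⊤ := by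
  have hsub : Ioi (0:ℝ) ⊆ (Ioc (0:ℝ) (1 / 2) ∪ Ioc (1 / 2 : ℝ) (3 / 2)) ∪ Ioi (3 / 2 : ℝ) := by
    intro τ hτ
    have hτ0 : 0 < τ := hτ
    by_cases a : τ ≤ 1 / 2
    · exact Or.inl (Or.inl ⟨hτ0, a⟩)
    · by_cases b : τ ≤ 3 / 2
      · exact Or.inl (Or.inr ⟨not_le.mp a, b⟩)
      · exact Or.inr (not_le.mp b)
  refine ne_top_of_le_ne_top ?_ ((lintegral_mono_set hsub).trans (lintegral_union_le _ _ _))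
  refine ENNReal.add_ne_top.mpr ⟨?_, h3⟩
  exact ne_top_of_le_ne_top (ENNReal.add_ne_top.mpr ⟨h1, h2⟩) (lintegral_union_le _ _ _)

lemma fh_near_int {r : ℝ} (hr : -1 < r) :
    IntegrableOn (fun τ : ℝ => |τ - 1| ^ r) (Ioc (1 / 2) (3 / 2)) := by
  have h0 : IntervalIntegrable (fun x : ℝ => x ^ r) volume 0 (1 / 2) :=
    intervalIntegral.intervalIntegrable_rpow' hr
  have hA : IntervalIntegrable (fun τ : ℝ => |τ - 1| ^ r) volume 1 (3 / 2) := by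
    have := h0.comp_sub_right 1
    norm_num at this
    refine this.congr ?_
    intro τ hτ
    rw [uIoc_of_le (by norm_num)] at hτ
    have : 0 < τ - 1 := by linarith [hτ.1]
    simp only [abs_of_pos this]
  have hB : IntervalIntegrable (fun τ : ℝ => |τ - 1| ^ r) volume (1 / 2) 1 := by
    have := (h0.comp_sub_left 1).symm
    norm_num at this
    refine this.congr ?_
    intro τ hτ
    rw [uIoc_of_le (by norm_num)] at hτ
    have : 0 ≤ 1 - τ := by linarith [hτ.2]
    simp only [abs_sub_comm τ 1, abs_of_nonneg this]
  exact (intervalIntegrable_iff_integrableOn_Ioc_of_le (by norm_num)).mp (hB.trans hA)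

lemma fh_near_fin {α : ℝ} (hα0 : 0 < α) (hα2 : α < 2) :
    ∫⁻ τ in Ioi (0:ℝ), ENNReal.ofReal
      ((Ioc (1 / 2 : ℝ) (3 / 2)).indicator (fun τ => τ ^ ((α - 1) / 2)) τ * |τ - 1| ^ (-(α / 2))) ≠ ⊤ := by
  apply fh_lint_cover
  · refine fh_lint_fin measurableSet_Ioc (H := fun _ => 0) integrableOn_zero ?_
    intro τ hτ
    rw [indicator_of_notMem (fun h => not_lt.mpr hτ.2 h.1), zero_mul]
  · refine fh_lint_fin measurableSet_Ioc (H := fun τ => 2 * |τ - 1| ^ (-(α / 2)))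
      ((fh_near_int (by linarith)).const_mul 2) ?_
    intro τ hτ
    rw [indicator_of_mem hτ]
    have h0 : 0 < τ := by linarith [hτ.1]
    refine mul_le_mul_of_nonneg_right ?_ (by positivity)
    rcases le_total τ 1 with h | h
    · calc τ ^ ((α - 1) / 2) ≤ τ ^ (-1 : ℝ) := Real.rpow_le_rpow_of_exponent_ge h0 h (by linarith)
        _ = τ⁻¹ := Real.rpow_neg_one τ
        _ ≤ 2 := by rw [inv_le_comm₀ h0 (by norm_num)]; linarith [hτ.1]
    · calc τ ^ ((α - 1) / 2) ≤ τ ^ (1 : ℝ) := Real.rpow_le_rpow_of_exponent_le h (by linarith)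
        _ = τ := Real.rpow_one τ
        _ ≤ 2 := by linarith [hτ.2]
  · refine fh_lint_fin measurableSet_Ioi (H := fun _ => 0) integrableOn_zero ?_
    intro τ hτ
    rw [indicator_of_notMem (fun h => not_lt.mpr h.2 hτ), zero_mul]

lemma fh_far_fin {α : ℝ} (hα0 : 0 < α) (hα2 : α < 2) :
    ∫⁻ τ in Ioi (0:ℝ), ENNReal.ofReal
      ((Ioc (1 / 2 : ℝ) (3 / 2))ᶜ.indicator (fun τ => τ ^ ((α - 1) / 2)) τ * |τ - 1| ^ (-1 - α)) ≠ ⊤ := by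
  apply fh_lint_cover
  · refine fh_lint_fin measurableSet_Ioc (H := fun τ => (τ ^ ((α - 1) / 2)) * (1 / 2) ^ (-1 - α)) ?_ ?_
    · have := (intervalIntegral.intervalIntegrable_rpow' (a := 0) (b := 1 / 2) (r := (α - 1) / 2)
        (by linarith))
      exact ((intervalIntegrable_iff_integrableOn_Ioc_of_le (by norm_num)).mp this).mul_const _
    intro τ hτ
    have h0 : 0 < τ := hτ.1
    have hmem : τ ∈ (Ioc (1 / 2 : ℝ) (3 / 2))ᶜ := fun h => not_lt.mpr hτ.2 h.1
    rw [indicator_of_mem hmem]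
    refine mul_le_mul_of_nonneg_left ?_ (by positivity)
    apply Real.rpow_le_rpow_of_nonpos (by norm_num) _ (by linarith)
    rw [abs_sub_comm]
    refine le_trans ?_ (le_abs_self _)
    linarith [hτ.2]
  · refine fh_lint_fin measurableSet_Ioc (H := fun _ => 0) integrableOn_zero ?_
    intro τ hτ
    have hmem : τ ∉ (Ioc (1 / 2 : ℝ) (3 / 2))ᶜ := fun h => h hτ
    rw [indicator_of_notMem hmem, zero_mul]
  · refine fh_lint_fin measurableSet_Ioi
      (H := fun τ => (τ ^ ((α - 1) / 2 + (-1 - α))) * (1 / 3) ^ (-1 - α)) ?_ ?_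
    · exact (integrableOn_Ioi_rpow_of_lt (by linarith) (by norm_num)).mul_const _
    intro τ hτ
    have hτ1 : 3 / 2 < τ := hτ
    have h0 : 0 < τ := by linarith
    have hmem : τ ∈ (Ioc (1 / 2 : ℝ) (3 / 2))ᶜ := fun h => not_lt.mpr h.2 hτ
    rw [indicator_of_mem hmem, Real.rpow_add h0, mul_assoc,
      ← Real.mul_rpow h0.le (by norm_num)]
    refine mul_le_mul_of_nonneg_left ?_ (by positivity)
    apply Real.rpow_le_rpow_of_nonpos (by positivity) _ (by linarith)
    refine le_trans ?_ (le_abs_self _)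
    linarith

/-- the remainder weight -/
noncomputable def fhW {d : ℕ} (α : ℝ) (p : EuclideanSpace ℝ (Fin (d + 1))) : ℝ :=
  ‖p - fhE d‖ ^ (-((d : ℝ) + 1 + α)) * p (Fin.last d) ^ ((α - 1) / 2)

lemma fh_abs_last_le {d : ℕ} (p : EuclideanSpace ℝ (Fin (d + 1))) :
    |p (Fin.last d) - 1| ≤ ‖p - fhE d‖ := by
  have := PiLp.norm_apply_le (p - fhE d) (Fin.last d)
  simpa [fhE_last] using this

lemma fhL_near {d : ℕ} (p : EuclideanSpace ℝ (Fin (d + 1)))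
    (h : p (Fin.last d) ∈ Ioc (1 / 2 : ℝ) (3 / 2)) : 0 ≤ fhL p ∧ fhL p ≤ 5 * ‖p - fhE d‖ := by
  set τ := p (Fin.last d) with hτ
  have h0 : 0 < τ := by linarith [h.1]
  have h1 : 1 / τ ≤ 2 := by rw [div_le_iff₀ h0]; linarith [h.1]
  have h2 := fh_abs_last_le p
  rw [← hτ] at h2
  have h3 : |Real.log τ| ≤ 2 * |τ - 1| := by
    have a := Real.log_le_sub_one_of_pos h0
    have b := Real.one_sub_inv_le_log_of_pos h0
    rw [← one_div] at b
    have c : 1 - 1 / τ = (τ - 1) * (1 / τ) := by field_simp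
    rw [c] at b
    have c0 : 0 < 1 / τ := by positivity
    have e := neg_abs_le (τ - 1)
    have f := le_abs_self (τ - 1)
    have g := abs_nonneg (τ - 1)
    rw [abs_le]
    constructor
    · nlinarith
    · linarith
  have hn := norm_nonneg (p - fhE d)
  unfold fhL
  rw [← hτ]
  constructor
  · positivity
  · nlinarith

lemma fh_min_le {A r q : ℝ} (hA : 0 ≤ A) (hr : 0 < r) (hq0 : 0 ≤ q) (hq2 : q ≤ 2) :
    min 4 (A * r ^ 2) ≤ (4 + A) * r ^ q := by
  have hrq : 0 ≤ r ^ q := by positivity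
  rcases le_total r 1 with h | h
  · refine (min_le_right _ _).trans ?_
    have : r ^ 2 ≤ r ^ q := by
      rw [← Real.rpow_natCast]
      exact Real.rpow_le_rpow_of_exponent_ge hr h (by exact_mod_cast hq2)
    nlinarith
  · refine (min_le_left _ _).trans ?_
    have := Real.one_le_rpow h hq0
    nlinarith

lemma fh_dom {d : ℕ} {α : ℝ} (hα0 : 0 < α) (hα2 : α < 2) {C : ℝ} (hC : 0 ≤ C) :
    ∫⁻ p in halfSpace d, ENNReal.ofReal (fhW α p * min 4 (C * (fhL p) ^ 2)) ≠ ⊤ := by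
  set g1 : ℝ → ℝ := (Ioc (1 / 2 : ℝ) (3 / 2)).indicator (fun τ => τ ^ ((α - 1) / 2)) with hg1
  set g2 : ℝ → ℝ := (Ioc (1 / 2 : ℝ) (3 / 2))ᶜ.indicator (fun τ => τ ^ ((α - 1) / 2)) with hg2
  have m1 : Measurable g1 := Measurable.indicator (by fun_prop) measurableSet_Ioc
  have m2 : Measurable g2 := Measurable.indicator (by fun_prop) measurableSet_Ioc.compl
  have n1 : ∀ τ, 0 < τ → 0 ≤ g1 τ := by
    intro τ hτ; exact indicator_apply_nonneg (fun _ => by positivity)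
  have n2 : ∀ τ, 0 < τ → 0 ≤ g2 τ := by
    intro τ hτ; exact indicator_apply_nonneg (fun _ => by positivity)
  have k1 := fh_split_kernel (d := d) (q := (d : ℝ) + α / 2) (by linarith) g1 m1 n1
  have k2 := fh_split_kernel (d := d) (q := (d : ℝ) + 1 + α) (by linarith) g2 m2 n2
  rw [show (d : ℝ) - (d + α / 2) = -(α / 2) by ring] at k1
  rw [show (d : ℝ) - (d + 1 + α) = -1 - α by ring] at k2
  have f1 : ∫⁻ p in halfSpace d, ENNReal.ofReal (‖p - fhE d‖ ^ (-((d : ℝ) + α / 2)) * g1 (p (Fin.last d)))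
      ≠ ⊤ := by
    rw [k1]; exact ENNReal.mul_ne_top (by simp) (fh_near_fin hα0 hα2)
  have f2 : ∫⁻ p in halfSpace d, ENNReal.ofReal (‖p - fhE d‖ ^ (-((d : ℝ) + 1 + α)) * g2 (p (Fin.last d)))
      ≠ ⊤ := by
    rw [k2]; exact ENNReal.mul_ne_top (by simp) (fh_far_fin hα0 hα2)
  have hle : ∫⁻ p in halfSpace d, ENNReal.ofReal (fhW α p * min 4 (C * (fhL p) ^ 2)) ≤
      ∫⁻ p in halfSpace d, (ENNReal.ofReal (4 + C * 25) *
        ENNReal.ofReal (‖p - fhE d‖ ^ (-((d : ℝ) + α / 2)) * g1 (p (Fin.last d))) +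
        ENNReal.ofReal 4 * ENNReal.ofReal (‖p - fhE d‖ ^ (-((d : ℝ) + 1 + α)) * g2 (p (Fin.last d)))) := by
    refine setLIntegral_mono' (fh_measD d) ?_
    intro p hp
    have hp0 : 0 < p (Fin.last d) := hp
    have hτb : 0 ≤ p (Fin.last d) ^ ((α - 1) / 2) := by positivity
    have hd : (0:ℝ) ≤ d := by positivity
    by_cases h : p (Fin.last d) ∈ Ioc (1 / 2 : ℝ) (3 / 2)
    · refine le_trans ?_ le_self_add
      rw [← ENNReal.ofReal_mul (by positivity)]
      apply ENNReal.ofReal_le_ofReal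
      rw [hg1, indicator_of_mem h]
      obtain ⟨l0, l1⟩ := fhL_near p h
      unfold fhW
      rcases (norm_nonneg (p - fhE d)).eq_or_lt with hr | hr
      · rw [← hr, Real.zero_rpow (by linarith), Real.zero_rpow (by linarith)]; simp
      · set r := ‖p - fhE d‖ with hrdef
        have hmin : min 4 (C * (fhL p) ^ 2) ≤ (4 + C * 25) * r ^ (1 + α / 2) := by
          refine le_trans ?_ (fh_min_le (by positivity) hr (by linarith) (by linarith))
          apply min_le_min le_rfl
          rw [mul_assoc]
          apply mul_le_mul_of_nonneg_left _ hC
          calc fhL p ^ 2 ≤ (5 * r) ^ 2 := pow_le_pow_left₀ l0 l1 2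
            _ = 25 * r ^ 2 := by ring
        have e : r ^ (-((d : ℝ) + α / 2)) = r ^ (-((d : ℝ) + 1 + α)) * r ^ (1 + α / 2) := by
          rw [← Real.rpow_add hr]; congr 1; ring
        rw [e]
        calc _ ≤ r ^ (-((d : ℝ) + 1 + α)) * p (Fin.last d) ^ ((α - 1) / 2) *
              ((4 + C * 25) * r ^ (1 + α / 2)) := by gcongr
          _ = _ := by ring
    · refine le_trans ?_ le_add_self
      rw [← ENNReal.ofReal_mul (by positivity)]
      apply ENNReal.ofReal_le_ofReal
      rw [hg2, indicator_of_mem h]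
      unfold fhW
      rw [mul_comm 4]
      gcongr
      exact min_le_left _ _
  refine ne_top_of_le_ne_top ?_ hle
  rw [lintegral_add_left (by fun_prop), lintegral_const_mul' _ _ (by simp),
    lintegral_const_mul' _ _ (by simp)]
  exact ENNReal.add_ne_top.mpr ⟨ENNReal.mul_ne_top (by simp) f1, ENNReal.mul_ne_top (by simp) f2⟩

lemma fh_rem_tendsto {d : ℕ} {α : ℝ} (hα0 : 0 < α) (hα2 : α < 2) {C : ℝ} (hC : 0 ≤ C) :
    Filter.Tendsto (fun n : ℕ => ∫⁻ p in halfSpace d,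
      ENNReal.ofReal (fhW α p * min 4 (C * (fhL p / ((n : ℝ) + 1)) ^ 2))) Filter.atTop (nhds 0) := by
  have hLm : Measurable (fhL (d := d)) := by
    have h3 : Measurable (fun x : EuclideanSpace ℝ (Fin (d + 1)) => |Real.log (x (Fin.last d))|) :=
      (continuous_abs.measurable).comp (Real.measurable_log.comp (by fun_prop))
    unfold fhL
    fun_prop
  have hWm : Measurable (fhW (d := d) α) := by
    unfold fhW
    fun_prop
  have := tendsto_lintegral_of_dominated_convergence (μ := volume.restrict (halfSpace d))
    (F := fun (n : ℕ) p => ENNReal.ofReal (fhW α p * min 4 (C * (fhL p / ((n : ℝ) + 1)) ^ 2)))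
    (f := fun _ => 0)
    (fun p => ENNReal.ofReal (fhW α p * min 4 (C * (fhL p) ^ 2)))
    (fun n => by fun_prop) (fun n => ?_) (fh_dom hα0 hα2 hC) ?_
  · simpa using this
  · filter_upwards [ae_restrict_mem (fh_measD d)] with p hp
    have hp0 : 0 < p (Fin.last d) := hp
    have hW : 0 ≤ fhW α p := by unfold fhW; positivity
    apply ENNReal.ofReal_le_ofReal
    apply mul_le_mul_of_nonneg_left _ hW
    apply min_le_min le_rfl
    apply mul_le_mul_of_nonneg_left _ hC
    rw [div_pow]
    apply div_le_self (sq_nonneg _)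
    have : (0:ℝ) ≤ n := by positivity
    nlinarith
  · filter_upwards with p
    rw [← ENNReal.ofReal_zero]
    apply ENNReal.tendsto_ofReal
    have h1 : Filter.Tendsto (fun n : ℕ => fhL p / ((n : ℝ) + 1)) Filter.atTop (nhds 0) := by
      apply Filter.Tendsto.div_atTop tendsto_const_nhds
      exact Filter.tendsto_atTop_add_const_right _ _ tendsto_natCast_atTop_atTop
    have hc : Continuous (fun t : ℝ => fhW α p * min 4 (C * t ^ 2)) := by fun_prop
    have h2 := (hc.tendsto 0).comp h1
    simpa [Function.comp_def] using h2

lemma fh_kappa_nonneg (d : ℕ) {α : ℝ} (hα0 : 0 < α) (hα2 : α < 2) : 0 ≤ kappa (d + 1) α := by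
  have hnn : 0 ≤ (eulerBeta ((1 + α) / 2) ((2 - α) / 2) - 2 ^ α) / (α * 2 ^ α) := by
    rw [← fh_gamma_identity hα0 hα2, ← fh_f_integral hα0 hα2]
    refine setIntegral_nonneg measurableSet_Ioo fun t ht => ?_
    have h1t : 0 < 1 - t := by linarith [ht.2]
    positivity
  unfold kappa
  refine mul_nonneg ?_ hnn
  have h1 : 0 < Real.Gamma ((1 + α) / 2) := Real.Gamma_pos_of_pos (by linarith)
  have h2 : 0 < Real.Gamma ((α + ((d + 1 : ℕ) : ℝ)) / 2) := Real.Gamma_pos_of_pos (by positivity)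
  positivity

/-- the test functions -/
noncomputable def fhu (d : ℕ) (α n : ℝ) (x : EuclideanSpace ℝ (Fin (d + 1))) : ℝ :=
  (max (x (Fin.last d)) (Real.exp (-(2 * n)))) ^ ((α - 1) / 2) *
    max 0 (1 - ‖fhP x‖ / (n * Real.exp n) -
      |Real.log (max (x (Fin.last d)) (Real.exp (-(2 * n))))| / n)

lemma fhu_cont (d : ℕ) (α n : ℝ) : Continuous (fhu d α n) := by
  have h1 : Continuous (fun x : EuclideanSpace ℝ (Fin (d + 1)) =>
      max (x (Fin.last d)) (Real.exp (-(2 * n)))) := by fun_prop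
  have h2 : ∀ x : EuclideanSpace ℝ (Fin (d + 1)),
      max (x (Fin.last d)) (Real.exp (-(2 * n))) ≠ 0 := fun x =>
    (lt_of_lt_of_le (Real.exp_pos _) (le_max_right _ _)).ne'
  have h3 := h1.log h2
  have h4 := h1.rpow_const (p := (α - 1) / 2) (fun x => Or.inl (h2 x))
  have h5 := fhP_cont (d := d)
  unfold fhu
  refine h4.mul (continuous_const.max ?_)
  exact (continuous_const.sub (h5.norm.div_const _)).sub (h3.abs.div_const _)

/-- the compact set carrying the test function -/
def fhK (d : ℕ) (n : ℝ) : Set (EuclideanSpace ℝ (Fin (d + 1))) :=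
  {x | ‖fhP x‖ ≤ n * Real.exp n ∧ Real.exp (-n) ≤ x (Fin.last d) ∧ x (Fin.last d) ≤ Real.exp n}

lemma fhK_compact (d : ℕ) (n : ℝ) : IsCompact (fhK d n) := by
  have h5 := fhP_cont (d := d)
  apply Metric.isCompact_of_isClosed_isBounded
  · have h6 : Continuous (fun x : EuclideanSpace ℝ (Fin (d + 1)) => x (Fin.last d)) := by fun_prop
    exact (isClosed_le h5.norm continuous_const).inter
      ((isClosed_le continuous_const h6).inter (isClosed_le h6 continuous_const))
  · refine (Metric.isBounded_closedBall (x := (0 : EuclideanSpace ℝ (Fin (d + 1))))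
      (r := n * Real.exp n + Real.exp n * ‖fhE d‖)).subset ?_
    intro x hx
    rw [mem_closedBall_zero_iff]
    have hx0 : 0 ≤ x (Fin.last d) := le_trans (Real.exp_pos _).le hx.2.1
    have e : x = fhP x + x (Fin.last d) • fhE d := by unfold fhP; abel
    calc ‖x‖ = ‖fhP x + x (Fin.last d) • fhE d‖ := by rw [← e]
      _ ≤ ‖fhP x‖ + ‖x (Fin.last d) • fhE d‖ := norm_add_le _ _
      _ ≤ _ := by
        rw [norm_smul, Real.norm_of_nonneg hx0]
        gcongr
        · exact hx.1
        · exact hx.2.2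

lemma fhu_supp {d : ℕ} {α n : ℝ} (hn : 0 < n) : Function.support (fhu d α n) ⊆ fhK d n := by
  intro x hx
  have hR : 0 < n * Real.exp n := by positivity
  have h0 : 0 < 1 - ‖fhP x‖ / (n * Real.exp n) -
      |Real.log (max (x (Fin.last d)) (Real.exp (-(2 * n))))| / n := by
    by_contra hcon
    apply hx
    unfold fhu
    rw [max_eq_left (not_lt.mp hcon), mul_zero]
  have h1 : 0 ≤ ‖fhP x‖ / (n * Real.exp n) := by positivity
  have h2 : 0 ≤ |Real.log (max (x (Fin.last d)) (Real.exp (-(2 * n))))| / n := by positivity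
  have h3 : ‖fhP x‖ / (n * Real.exp n) ≤ 1 := by linarith
  have h4 : |Real.log (max (x (Fin.last d)) (Real.exp (-(2 * n))))| / n ≤ 1 := by linarith
  rw [div_le_iff₀ hR, one_mul] at h3
  rw [div_le_iff₀ hn, one_mul, abs_le] at h4
  have hm : 0 < max (x (Fin.last d)) (Real.exp (-(2 * n))) :=
    lt_of_lt_of_le (Real.exp_pos _) (le_max_right _ _)
  rw [Real.le_log_iff_exp_le hm, Real.log_le_iff_le_exp hm] at h4
  refine ⟨h3, ?_, (le_max_left _ _).trans h4.2⟩
  rcases le_max_iff.mp h4.1 with h | h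
  · exact h
  · rw [Real.exp_le_exp] at h; linarith

lemma fhu_eq {d : ℕ} {α n : ℝ} (hn : 0 < n) (x : EuclideanSpace ℝ (Fin (d + 1)))
    (hx : x ∈ halfSpace d) : fhu d α n x = x (Fin.last d) ^ ((α - 1) / 2) * fhv d n x := by
  have hx0 : 0 < x (Fin.last d) := hx
  by_cases h : Real.exp (-(2 * n)) ≤ x (Fin.last d)
  · unfold fhu fhv
    rw [max_eq_left h]
  · have h' := not_le.mp h
    have hv : fhv d n x = 0 := by
      apply fhv_zero hn
      intro hS
      have h1 := (abs_le.mp hS.2).1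
      rw [Real.le_log_iff_exp_le hx0] at h1
      have : Real.exp (-(2 * n)) ≤ Real.exp (-n) := Real.exp_le_exp.mpr (by linarith)
      linarith
    have hu : fhu d α n x = 0 := by
      by_contra hne
      have h1 := (fhu_supp hn (Function.mem_support.mpr hne)).2.1
      have : Real.exp (-(2 * n)) ≤ Real.exp (-n) := Real.exp_le_exp.mpr (by linarith)
      linarith
    rw [hv, hu, mul_zero]

lemma fhu_mass {d : ℕ} {α n : ℝ} (hn : 0 < n) :
    ∫ x in halfSpace d, fhu d α n x ^ 2 * x (Fin.last d) ^ (-α) = (fhN d n).toReal := by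
  have hu := (fhu_cont d α n).measurable
  rw [integral_eq_lintegral_of_nonneg_ae]
  · congr 1
    refine setLIntegral_congr_fun (fh_measD d) ?_
    intro x hx
    have hx0 : 0 < x (Fin.last d) := hx
    dsimp only
    rw [fhu_eq hn x hx, ← ENNReal.ofReal_mul (by positivity)]
    congr 1
    have e : (x (Fin.last d))⁻¹ = (x (Fin.last d) ^ ((α - 1) / 2)) ^ 2 * x (Fin.last d) ^ (-α) := by
      rw [← Real.rpow_natCast, ← Real.rpow_mul hx0.le, ← Real.rpow_add hx0, ← Real.rpow_neg_one]
      congr 1; push_cast; ring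
    rw [e]; ring
  · filter_upwards [ae_restrict_mem (fh_measD d)] with x hx
    have hx0 : 0 < x (Fin.last d) := hx
    show 0 ≤ _
    positivity
  · exact Measurable.aestronglyMeasurable (by fun_prop)

theorem fractional_hardy_halfspace_optimal (d : ℕ) (α : ℝ) (hα0 : 0 < α) (hα2 : α < 2)
    (K : ℝ) (hK : kappa (d + 1) α < K) :
    ∃ u : EuclideanSpace ℝ (Fin (d + 1)) → ℝ, Continuous u ∧ HasCompactSupport u ∧
      tsupport u ⊆ halfSpace d ∧
      (1 / 2) * ∫ x in halfSpace d, ∫ y in halfSpace d,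
          (u x - u y) ^ 2 / ‖x - y‖ ^ ((d : ℝ) + 1 + α) <
        K * ∫ x in halfSpace d, u x ^ 2 * x (Fin.last d) ^ (-α) := by
  have hκ := fh_kappa_nonneg d hα0 hα2
  set ε := K - kappa (d + 1) α with hε
  have hε0 : 0 < ε := by rw [hε]; linarith
  have hev := (fh_rem_tendsto (d := d) hα0 hα2 (C := 2 * 4 ^ (d + 2)) (by positivity)).eventually_lt_const
    (u := ENNReal.ofReal ε) (by simpa using hε0)
  obtain ⟨m, hm⟩ := hev.exists
  set n : ℝ := (m : ℝ) + 1 with hn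
  have hn0 : 0 < n := by positivity
  refine ⟨fhu d α n, fhu_cont d α n, ?_, ?_, ?_⟩
  · exact HasCompactSupport.of_support_subset_isCompact (fhK_compact d n) (fhu_supp hn0)
  · refine (closure_minimal (fhu_supp hn0) (fhK_compact d n).isClosed).trans ?_
    intro x hx
    exact lt_of_lt_of_le (Real.exp_pos _) hx.2.1
  · rw [fhu_mass hn0]
    set u := fhu d α n with hu
    have hN : 0 < (fhN d n).toReal := ENNReal.toReal_pos (fhN_pos hn0) (fhN_top hn0)
    have hE := fh_energy (α := α) u (fhv d n) (fhv_meas d n) (fhu_cont d α n).measurable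
      (fun x hx => fhu_eq hn0 x hx) (fhN_top hn0)
    rw [fh_const hα0 hα2] at hE
    have hEle : ∫⁻ x in halfSpace d, ∫⁻ y in halfSpace d,
        ENNReal.ofReal ((u x - u y) ^ 2 / ‖x - y‖ ^ ((d : ℝ) + 1 + α)) ≤
        ENNReal.ofReal (2 * kappa (d + 1) α + ε) * fhN d n := by
      rw [hE, ENNReal.ofReal_add (by positivity) hε0.le, add_mul]
      refine add_le_add le_rfl ?_
      refine le_trans ?_ (mul_le_mul_left hm.le (fhN d n))
      rw [← lintegral_mul_const' _ _ (fhN_top hn0)]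
      refine setLIntegral_mono' (fh_measD d) ?_
      intro p hp
      have hp0 : 0 < p (Fin.last d) := hp
      have hW : 0 ≤ fhW α p := by unfold fhW; positivity
      rw [ENNReal.ofReal_mul hW, mul_assoc]
      exact mul_le_mul_right (fhY_bound hn0 p hp) _
    have hI : ‖∫ x in halfSpace d, ∫ y in halfSpace d,
          (u x - u y) ^ 2 / ‖x - y‖ ^ ((d : ℝ) + 1 + α)‖ₑ ≤
        ENNReal.ofReal (2 * kappa (d + 1) α + ε) * fhN d n := by
      refine le_trans ?_ hEle
      refine (enorm_integral_le_lintegral_enorm _).trans (lintegral_mono fun x => ?_)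
      refine (enorm_integral_le_lintegral_enorm _).trans (lintegral_mono fun y => ?_)
      rw [Real.enorm_of_nonneg (by positivity)]
    have hI2 := ENNReal.toReal_mono (ENNReal.mul_ne_top (by simp) (fhN_top hn0)) hI
    rw [toReal_enorm, ENNReal.toReal_mul, ENNReal.toReal_ofReal (by positivity)] at hI2
    have hI3 := (le_abs_self _).trans hI2
    nlinarith [mul_pos hε0 hN]
end

section
/- Let 0 < α < 2, d ≥ 1, D = {x ∈ ℝ^d : x_d > 0}, and let A_{d,−α} = Γ((d+α)/2) / (2^{−α} π^{d/2} |Γ(−α/2)|). For every smooth compactly supported function u : ℝ^d → ℝ with support contained in D, (1/2)·A_{d,−α} ∫_{ℝ^d} ∫_{ℝ^d} (u(x) − u(y))² / |x − y|^{d+α} dx dy ≥ [Γ((1+α)/2)² / π] ∫_D u(x)² x_d^{−α} dx. -/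
open MeasureTheory Real Set

/-- The normalizing constant `A_{d,-α}` of the fractional Laplacian in dimension `d`. -/
noncomputable def fracLapConst (d : ℕ) (α : ℝ) : ℝ :=
  Real.Gamma (((d : ℝ) + α) / 2) / (2 ^ (-α) * Real.pi ^ ((d : ℝ) / 2) * |Real.Gamma (-α / 2)|)

lemma betaReal_integrable {a b : ℝ} (ha : 0 < a) (hb : 0 < b) :
    IntervalIntegrable (fun s : ℝ => s ^ (a - 1) * (1 - s) ^ (b - 1)) volume 0 1 := by
  have h := Complex.betaIntegral_convergent (u := a) (v := b) (by simpa) (by simpa)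
  rw [intervalIntegrable_iff_integrableOn_Ioc_of_le zero_le_one] at h ⊢
  refine (Integrable.re h).congr ?_
  refine (ae_restrict_iff' measurableSet_Ioc).2 (ae_of_all _ fun x hx => ?_)
  have h1 : ((x : ℂ) ^ ((a : ℂ) - 1) * (1 - (x : ℂ)) ^ ((b : ℂ) - 1)) =
      ((x ^ (a - 1) * (1 - x) ^ (b - 1) : ℝ) : ℂ) := by
    rw [Complex.ofReal_mul, Complex.ofReal_cpow hx.1.le, Complex.ofReal_cpow (by linarith [hx.2])]
    push_cast; rfl
  simp only [h1]
  simp only [RCLike.re_to_complex, Complex.ofReal_re]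

lemma betaReal_integral {a b : ℝ} (ha : 0 < a) (hb : 0 < b) :
    ∫ s in (0:ℝ)..1, s ^ (a - 1) * (1 - s) ^ (b - 1) = Gamma a * Gamma b / Gamma (a + b) := by
  have h := ProbabilityTheory.beta_eq_betaIntegralReal a b ha hb
  rw [ProbabilityTheory.beta] at h
  rw [h, Complex.betaIntegral]
  have h1 : ∫ x in (0:ℝ)..1, ((x : ℂ) ^ ((a : ℂ) - 1) * (1 - (x : ℂ)) ^ ((b : ℂ) - 1)) =
      ∫ x in (0:ℝ)..1, ((x ^ (a - 1) * (1 - x) ^ (b - 1) : ℝ) : ℂ) := by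
    refine intervalIntegral.integral_congr fun x hx => ?_
    rw [uIcc_of_le zero_le_one] at hx
    rw [Complex.ofReal_mul, Complex.ofReal_cpow hx.1, Complex.ofReal_cpow (by linarith [hx.2])]
    push_cast; rfl
  rw [h1, intervalIntegral.integral_ofReal, Complex.ofReal_re]

/-- truncated beta-type integrals are fine. -/
lemma trunc_integrable {a b δ : ℝ} (ha : -1 < a) (hδ0 : 0 < δ) (hδ : δ < 1) :
    IntervalIntegrable (fun s : ℝ => s ^ a * (1 - s) ^ b) volume 0 δ := by
  refine (intervalIntegral.intervalIntegrable_rpow' ha).mul_continuousOn ?_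
  intro s hs
  rw [uIcc_of_le hδ0.le] at hs
  refine ContinuousAt.continuousWithinAt ?_
  exact (continuousAt_const.sub continuousAt_id).rpow_const (Or.inl (by simp; linarith [hs.2]))

lemma N_deriv {α s : ℝ} (hs0 : 0 < s) (hs1 : s < 1) :
    HasDerivAt (fun s : ℝ => (1 - s) ^ (-α) * (s ^ α - (3 - s) * s ^ ((1 + α) / 2)))
      (α * ((s ^ (α - 1) * (1 - s) ^ (-(1 + α))) - 2 * (s ^ ((α - 1) / 2) * (1 - s) ^ (-(1 + α))))
        - (3 - α) / 2 * (s ^ ((α - 1) / 2) * (1 - s) ^ (1 - α))) s := by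
  have h1s : 0 < 1 - s := by linarith
  have hA : HasDerivAt (fun s : ℝ => (1 - s) ^ (-α)) (-1 * (-α) * (1 - s) ^ (-α - 1)) s :=
    ((hasDerivAt_id s).const_sub 1).rpow_const (Or.inl h1s.ne')
  have hB : HasDerivAt (fun s : ℝ => s ^ α) (1 * α * s ^ (α - 1)) s :=
    (hasDerivAt_id s).rpow_const (Or.inl hs0.ne')
  have hC : HasDerivAt (fun s : ℝ => s ^ ((1 + α) / 2))
      (1 * ((1 + α) / 2) * s ^ ((1 + α) / 2 - 1)) s :=
    (hasDerivAt_id s).rpow_const (Or.inl hs0.ne')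
  have hD : HasDerivAt (fun s : ℝ => 3 - s) (-1) s := (hasDerivAt_id s).const_sub 3
  have h := hA.mul (hB.sub (hD.mul hC))
  refine h.congr_deriv ?_
  have e1 : (1 - s) ^ (-α - 1) = (1 - s) ^ (-(1 + α)) := by congr 1; ring
  have e2 : (1 - s) ^ (-α) = (1 - s) ^ (-(1 + α)) * (1 - s) := by
    rw [← rpow_add_one h1s.ne']; congr 1; ring
  have e3 : (1 - s) ^ (1 - α) = (1 - s) ^ (-(1 + α)) * (1 - s) * (1 - s) := by
    rw [← rpow_add_one h1s.ne', ← rpow_add_one h1s.ne']; congr 1; ring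
  have e4 : s ^ α = s ^ (α - 1) * s := by
    rw [← rpow_add_one hs0.ne']; congr 1; ring
  have e5 : s ^ ((1 + α) / 2) = s ^ ((α - 1) / 2) * s := by
    rw [← rpow_add_one hs0.ne']; congr 1; ring
  have e6 : s ^ ((1 + α) / 2 - 1) = s ^ ((α - 1) / 2) := by congr 1; ring
  simp only [Pi.sub_apply, Pi.mul_apply]
  rw [e1, e2, e3, e4, e5, e6]
  ring

lemma G_eq {α δ : ℝ} (hα0 : 0 < α) (hδ0 : 0 < δ) (hδ : δ < 1) :
    (1 - δ) ^ (-α) / α + (∫ s in (0:ℝ)..δ, s ^ (α - 1) * (1 - s) ^ (-(1 + α)))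
      - 2 * (∫ s in (0:ℝ)..δ, s ^ ((α - 1) / 2) * (1 - s) ^ (-(1 + α))) =
    (1 / α) * ((1 - δ) ^ (-α) * (1 + δ ^ α - (3 - δ) * δ ^ ((1 + α) / 2))) +
      (3 - α) / (2 * α) * ∫ s in (0:ℝ)..δ, s ^ ((α - 1) / 2) * (1 - s) ^ (1 - α) := by
  have i1 := trunc_integrable (a := α - 1) (b := -(1 + α)) (by linarith) hδ0 hδ
  have i2 := trunc_integrable (a := (α - 1) / 2) (b := -(1 + α)) (by linarith) hδ0 hδ
  have i3 := trunc_integrable (a := (α - 1) / 2) (b := 1 - α) (by linarith) hδ0 hδ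
  have h := intervalIntegral.integral_eq_sub_of_hasDerivAt_of_le hδ0.le
    (f := fun s : ℝ => (1 - s) ^ (-α) * (s ^ α - (3 - s) * s ^ ((1 + α) / 2))) ?_
    (fun x hx => N_deriv hx.1 (hx.2.trans hδ)) (((i1.sub (i2.const_mul 2)).const_mul α).sub (i3.const_mul _))
  · rw [intervalIntegral.integral_sub ((i1.sub (i2.const_mul 2)).const_mul α) (i3.const_mul _),
      intervalIntegral.integral_const_mul, intervalIntegral.integral_sub i1 (i2.const_mul 2),
      intervalIntegral.integral_const_mul, intervalIntegral.integral_const_mul] at h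
    rw [zero_rpow hα0.ne', zero_rpow (by positivity)] at h
    field_simp
    linear_combination 2 * h
  · intro s hs
    refine ContinuousAt.continuousWithinAt ?_
    have c1 : ContinuousAt (fun s : ℝ => (1 - s) ^ (-α)) s :=
      (continuousAt_const.sub continuousAt_id).rpow_const (Or.inl (by simp; linarith [hs.2]))
    have c2 : ContinuousAt (fun s : ℝ => s ^ α) s := continuousAt_id.rpow_const (Or.inr hα0.le)
    have c3 : ContinuousAt (fun s : ℝ => s ^ ((1 + α) / 2)) s :=
      continuousAt_id.rpow_const (Or.inr (by positivity))
    exact c1.mul (c2.sub ((continuousAt_const.sub continuousAt_id).mul c3))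

open Filter Topology in
lemma bracket_tendsto {α : ℝ} (hα2 : α < 2) :
    Tendsto (fun δ : ℝ => (1 - δ) ^ (-α) * (1 + δ ^ α - (3 - δ) * δ ^ ((1 + α) / 2)))
      (𝓝[<] 1) (𝓝 0) := by
  set p := (α - 1) / 2 with hp
  have hs : Tendsto (slope (fun s : ℝ => s ^ p) 1) (𝓝[<] 1) (𝓝 (1 * p * 1 ^ (p - 1))) := by
    have := ((hasDerivAt_id (1:ℝ)).rpow_const (p := p) (Or.inl one_ne_zero))
    exact (hasDerivAt_iff_tendsto_slope.1 this).mono_left (nhdsWithin_mono _ (fun x hx => (ne_of_lt hx)))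
  have hpow : Tendsto (fun δ : ℝ => (1 - δ) ^ (2 - α)) (𝓝[<] 1) (𝓝 0) := by
    have : ContinuousAt (fun δ : ℝ => (1 - δ) ^ (2 - α)) 1 :=
      (continuousAt_const.sub continuousAt_id).rpow_const (Or.inr (by linarith))
    have h2 := this.tendsto
    simp only [sub_self] at h2
    rw [zero_rpow (by linarith)] at h2
    exact h2.mono_left nhdsWithin_le_nhds
  have hid : Tendsto (fun δ : ℝ => δ) (𝓝[<] 1) (𝓝 1) := tendsto_id.mono_left nhdsWithin_le_nhds
  have hlim := hpow.mul (tendsto_const_nhds (x := (1:ℝ)) |>.add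
    (hid.mul (hs.mul (hs.const_add 1))))
  rw [zero_mul] at hlim
  refine hlim.congr' ?_
  filter_upwards [Ioo_mem_nhdsLT (show (0:ℝ) < 1 by norm_num)] with δ hδ
  have h1s : 0 < 1 - δ := by linarith [hδ.2]
  have e1 : (1 - δ) ^ (2 - α) = (1 - δ) ^ (-α) * (1 - δ) * (1 - δ) := by
    rw [← rpow_add_one h1s.ne', ← rpow_add_one h1s.ne']; congr 1; ring
  have e4 : δ ^ α = δ ^ p * δ ^ p * δ := by
    rw [← rpow_add hδ.1, ← rpow_add_one hδ.1.ne']; congr 1; ring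
  have e5 : δ ^ ((1 + α) / 2) = δ ^ p * δ := by
    rw [← rpow_add_one hδ.1.ne']; congr 1; ring
  have e7 : slope (fun s : ℝ => s ^ p) 1 δ = (1 - δ ^ p) / (1 - δ) := by
    rw [slope_def_field, one_rpow, ← neg_sub, ← neg_sub 1 δ, neg_div_neg_eq]
  rw [e1, e4, e5, e7]
  field_simp
  ring

open Filter Topology in
lemma G_tendsto {α : ℝ} (hα0 : 0 < α) (hα2 : α < 2) :
    Tendsto (fun δ : ℝ => (1 - δ) ^ (-α) / α + (∫ s in (0:ℝ)..δ, s ^ (α - 1) * (1 - s) ^ (-(1 + α)))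
      - 2 * (∫ s in (0:ℝ)..δ, s ^ ((α - 1) / 2) * (1 - s) ^ (-(1 + α)))) (𝓝[<] 1)
      (𝓝 (2 ^ (-α) * |Gamma (-α / 2)| * Gamma ((1 + α) / 2) / √π)) := by
  have hb := betaReal_integrable (a := (1 + α) / 2) (b := 2 - α) (by linarith) (by linarith)
  have hbi := betaReal_integral (a := (1 + α) / 2) (b := 2 - α) (by linarith) (by linarith)
  have ea : (1 + α) / 2 - 1 = (α - 1) / 2 := by ring
  have eb : 2 - α - 1 = 1 - α := by ring
  rw [ea, eb] at hb hbi
  have hc : Tendsto (fun δ : ℝ => ∫ s in (0:ℝ)..δ, s ^ ((α - 1) / 2) * (1 - s) ^ (1 - α)) (𝓝[<] 1)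
      (𝓝 (∫ s in (0:ℝ)..1, s ^ ((α - 1) / 2) * (1 - s) ^ (1 - α))) := by
    have := intervalIntegral.continuousOn_primitive_interval' hb (a := 0) (by simp)
    have h1 := this 1 (by simp)
    rw [uIcc_of_le zero_le_one] at h1
    refine h1.tendsto.mono_left ?_
    rw [← nhdsWithin_Ioo_eq_nhdsLT (show (0:ℝ) < 1 by norm_num)]
    exact nhdsWithin_mono _ Ioo_subset_Icc_self
  have hlim := ((bracket_tendsto hα2).const_mul (1 / α)).add (hc.const_mul ((3 - α) / (2 * α)))
  have hval : (1 / α * 0 + (3 - α) / (2 * α) * ∫ s in (0:ℝ)..1, s ^ ((α - 1) / 2) * (1 - s) ^ (1 - α))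
      = 2 ^ (-α) * |Gamma (-α / 2)| * Gamma ((1 + α) / 2) / √π := by
    rw [hbi]
    have g1 : Gamma ((1 + α) / 2 + (2 - α)) = (3 - α) / 2 * Gamma ((3 - α) / 2) := by
      rw [← Gamma_add_one (by linarith)]; congr 1; ring
    have g2 := Real.Gamma_mul_Gamma_add_half ((2 - α) / 2)
    have g3 : Gamma ((2 - α) / 2) = (-α / 2) * Gamma (-α / 2) := by
      rw [← Gamma_add_one (by linarith)]; congr 1; ring
    have g4 : 0 < Gamma ((2 - α) / 2) := Gamma_pos_of_pos (by linarith)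
    have g5 : Gamma (-α / 2) < 0 := by
      by_contra hcon
      push Not at hcon
      nlinarith
    have g6 : 0 < Gamma ((3 - α) / 2) := Gamma_pos_of_pos (by linarith)
    have g7 : (2:ℝ) ^ (1 - 2 * ((2 - α) / 2)) * 2 ^ (-α) = 1 / 2 := by
      rw [← rpow_add two_pos]
      rw [show (1 - 2 * ((2 - α) / 2) + -α) = -1 by ring, rpow_neg_one]; norm_num
    have g8 : (0:ℝ) < 2 ^ (-α) := by positivity
    have g9 : 0 < √π := by positivity
    have g10 : (2 - α) / 2 + 1 / 2 = (3 - α) / 2 := by ring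
    have g11 : 2 * ((2 - α) / 2) = 2 - α := by ring
    rw [g10] at g2
    rw [g11] at g2 g7
    rw [abs_of_neg g5, g1]
    have h3 : 3 - α ≠ 0 := by linarith
    rw [g3] at g2
    field_simp
    have hX : (2:ℝ) ^ (1 - (2 - α)) = 1 / 2 / 2 ^ (-α) := by
      rw [← g7]; field_simp
    rw [hX] at g2
    field_simp at g2
    linear_combination (-Gamma ((1 + α) / 2)) * g2
  rw [hval] at hlim
  refine hlim.congr' ?_
  filter_upwards [Ioo_mem_nhdsLT (show (0:ℝ) < 1 by norm_num)] with δ hδ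
  rw [G_eq hα0 hδ.1 hδ.2]
lemma lintegral_of_integral {X : Type*} [MeasurableSpace X] {μ : Measure X} {f : X → ℝ} {c : ℝ}
    (hf : ∀ᵐ x ∂μ, 0 ≤ f x) (hc : 0 < c) (h : ∫ x, f x ∂μ = c) :
    ∫⁻ x, ENNReal.ofReal (f x) ∂μ = ENNReal.ofReal c := by
  have hi : Integrable f μ := by
    by_contra hcon
    rw [integral_undef hcon] at h
    exact hc.ne h
  rw [← ofReal_integral_eq_lintegral_ofReal hi hf, h]

lemma lintegral_gamma {a r : ℝ} (ha : 0 < a) (hr : 0 < r) :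
    ∫⁻ t in Ioi (0:ℝ), ENNReal.ofReal (t ^ (a - 1) * exp (-(r * t))) =
      ENNReal.ofReal ((1 / r) ^ a * Gamma a) := by
  refine lintegral_of_integral ?_ ?_ (Real.integral_rpow_mul_exp_neg_mul_Ioi ha hr)
  · refine (ae_restrict_iff' measurableSet_Ioi).2 (ae_of_all _ fun t ht => ?_)
    have : (0:ℝ) < t := ht
    positivity
  · have := Gamma_pos_of_pos ha
    positivity

lemma lintegral_gauss {d : ℕ} {b : ℝ} (hb : 0 < b) :
    ∫⁻ v : EuclideanSpace ℝ (Fin d), ENNReal.ofReal (exp (-b * ‖v‖ ^ 2)) =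
      ENNReal.ofReal ((π / b) ^ ((d : ℝ) / 2)) := by
  refine lintegral_of_integral (ae_of_all _ fun _ => (exp_pos _).le) ?_ ?_
  · positivity
  · rw [GaussianFourier.integral_rexp_neg_mul_sq_norm hb]; simp

noncomputable def kap (d : ℕ) (α : ℝ) : ℝ :=
  π ^ ((d : ℝ) / 2) * Gamma ((1 + α) / 2) / Gamma (((d : ℝ) + 1 + α) / 2)

lemma slice_core {d : ℕ} {α A : ℝ} (hα : 0 < α) (hA : 0 < A) :
    ∫⁻ v : EuclideanSpace ℝ (Fin d), ENNReal.ofReal ((A + ‖v‖ ^ 2) ^ (-(((d : ℝ) + 1 + α) / 2))) =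
      ENNReal.ofReal (kap d α) * ENNReal.ofReal (A ^ (-((1 + α) / 2))) := by
  set β := ((d : ℝ) + 1 + α) / 2 with hβdef
  have hβ : 0 < β := by positivity
  have hG := Gamma_pos_of_pos hβ
  have hG1 : 0 < Gamma ((1 + α) / 2) := Gamma_pos_of_pos (by positivity)
  have h1 : ∀ v : EuclideanSpace ℝ (Fin d), ENNReal.ofReal ((A + ‖v‖ ^ 2) ^ (-β)) =
      ∫⁻ t in Ioi (0:ℝ), ENNReal.ofReal (1 / Gamma β * (t ^ (β - 1) * exp (-(A * t)))) *
        ENNReal.ofReal (exp (-t * ‖v‖ ^ 2)) := by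
    intro v
    have hr : 0 < A + ‖v‖ ^ 2 := by positivity
    have e : ∀ t ∈ Ioi (0:ℝ), ENNReal.ofReal (1 / Gamma β * (t ^ (β - 1) * exp (-(A * t)))) *
        ENNReal.ofReal (exp (-t * ‖v‖ ^ 2)) = ENNReal.ofReal (1 / Gamma β) *
          ENNReal.ofReal (t ^ (β - 1) * exp (-((A + ‖v‖ ^ 2) * t))) := by
      intro t ht
      have ht' : (0:ℝ) < t := ht
      rw [← ENNReal.ofReal_mul (by positivity), ← ENNReal.ofReal_mul (by positivity)]
      congr 1
      rw [show -((A + ‖v‖ ^ 2) * t) = -(A * t) + -t * ‖v‖ ^ 2 by ring, exp_add]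
      ring
    rw [setLIntegral_congr_fun measurableSet_Ioi e, lintegral_const_mul' _ _ ENNReal.ofReal_ne_top,
      lintegral_gamma hβ hr, ← ENNReal.ofReal_mul (by positivity)]
    congr 1
    rw [one_div (A + _), inv_rpow hr.le, rpow_neg hr.le]
    field_simp
  simp_rw [h1]
  rw [lintegral_lintegral_swap (by
    refine Measurable.aemeasurable ?_
    unfold Function.uncurry
    fun_prop)]
  have h2 : ∀ t ∈ Ioi (0:ℝ), (∫⁻ v : EuclideanSpace ℝ (Fin d),
      ENNReal.ofReal (1 / Gamma β * (t ^ (β - 1) * exp (-(A * t)))) *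
        ENNReal.ofReal (exp (-t * ‖v‖ ^ 2))) =
      ENNReal.ofReal (π ^ ((d : ℝ) / 2) / Gamma β) *
        ENNReal.ofReal (t ^ ((1 + α) / 2 - 1) * exp (-(A * t))) := by
    intro t ht
    have ht' : (0:ℝ) < t := ht
    rw [lintegral_const_mul' _ _ ENNReal.ofReal_ne_top, lintegral_gauss ht',
      ← ENNReal.ofReal_mul (by positivity), ← ENNReal.ofReal_mul (by positivity)]
    congr 1
    have : t ^ (β - 1) = t ^ ((1 + α) / 2 - 1) * t ^ ((d : ℝ) / 2) := by
      rw [← rpow_add ht']; congr 1; rw [hβdef]; ring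
    rw [this, div_rpow pi_pos.le ht'.le]
    field_simp
  rw [setLIntegral_congr_fun measurableSet_Ioi h2, lintegral_const_mul' _ _ ENNReal.ofReal_ne_top,
    lintegral_gamma (by positivity) hA, ← ENNReal.ofReal_mul (by positivity), ← ENNReal.ofReal_mul
    (by unfold kap; positivity)]
  congr 1
  rw [kap, one_div, inv_rpow hA.le, rpow_neg hA.le]
  ring

/-- Slicing in the last coordinate. -/
lemma lintegral_slice {d : ℕ} (f : EuclideanSpace ℝ (Fin (d + 1)) → ENNReal) (hf : Measurable f) :
    ∫⁻ y, f y = ∫⁻ t : ℝ, ∫⁻ v : EuclideanSpace ℝ (Fin d),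
      f (WithLp.toLp 2 ((Fin.last d).insertNth (α := fun _ => ℝ) t (fun i => v i))) := by
  rw [← (PiLp.volume_preserving_toLp (Fin (d + 1))).lintegral_comp hf]
  have hf1 : Measurable (fun z : Fin (d + 1) → ℝ => f (WithLp.toLp 2 z)) := by fun_prop
  have hmp := (volume_preserving_piFinSuccAbove (fun _ : Fin (d + 1) => ℝ) (Fin.last d)).symm
  rw [← hmp.lintegral_comp hf1]
  have hf2 : Measurable (fun z : ℝ × (Fin d → ℝ) => f (WithLp.toLp 2
    ((MeasurableEquiv.piFinSuccAbove (fun _ : Fin (d + 1) => ℝ) (Fin.last d)).symm z))) :=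
    hf1.comp (MeasurableEquiv.measurable _)
  rw [Measure.volume_eq_prod, lintegral_prod _ hf2.aemeasurable]
  refine lintegral_congr fun t => ?_
  have hf3 : Measurable (fun v : Fin d → ℝ => f (WithLp.toLp 2
    ((MeasurableEquiv.piFinSuccAbove (fun _ : Fin (d + 1) => ℝ) (Fin.last d)).symm (t, v)))) :=
    hf2.comp (by fun_prop)
  rw [← (PiLp.volume_preserving_ofLp (Fin d)).lintegral_comp hf3]
  rfl

lemma slice {d : ℕ} {α : ℝ} (hα : 0 < α) (x : EuclideanSpace ℝ (Fin (d + 1)))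
    (h : ℝ → ENNReal) (hh : Measurable h) :
    ∫⁻ y : EuclideanSpace ℝ (Fin (d + 1)),
        h (y (Fin.last d)) * ENNReal.ofReal (‖x - y‖ ^ (-((d : ℝ) + 1 + α))) =
      ENNReal.ofReal (kap d α) *
        ∫⁻ t, h t * ENNReal.ofReal (|x (Fin.last d) - t| ^ (-(1 + α))) := by
  rw [lintegral_slice _ (by fun_prop)]
  rw [← lintegral_const_mul _ (by fun_prop)]
  refine lintegral_congr_ae ?_
  have hne : ∀ᵐ t : ℝ, t ≠ x (Fin.last d) := by
    simp [ae_iff]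
  filter_upwards [hne] with t ht
  set A := (x (Fin.last d) - t) ^ 2 with hAdef
  have hA : 0 < A := by
    have : x (Fin.last d) - t ≠ 0 := sub_ne_zero.2 ht.symm
    positivity
  set w : EuclideanSpace ℝ (Fin d) := WithLp.toLp 2 (fun i => x (i.castSucc)) with hw
  have e1 : ∀ v : EuclideanSpace ℝ (Fin d),
      ‖x - WithLp.toLp 2 ((Fin.last d).insertNth (α := fun _ => ℝ) t (fun i => v i))‖
        ^ (-((d : ℝ) + 1 + α)) = (A + ‖w - v‖ ^ 2) ^ (-(((d : ℝ) + 1 + α) / 2)) := by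
    intro v
    have : ‖x - WithLp.toLp 2 ((Fin.last d).insertNth (α := fun _ => ℝ) t (fun i => v i))‖ ^ 2 =
        A + ‖w - v‖ ^ 2 := by
      rw [EuclideanSpace.norm_sq_eq, EuclideanSpace.norm_sq_eq, Fin.sum_univ_castSucc]
      simp [hAdef, hw, add_comm]
    rw [← this, ← rpow_natCast, ← rpow_mul (norm_nonneg _)]
    congr 1
    push_cast; ring
  simp_rw [e1]
  simp only [Fin.insertNth_apply_same]
  rw [lintegral_const_mul _ (by fun_prop)]
  rw [lintegral_sub_left_eq_self (fun v : EuclideanSpace ℝ (Fin d) =>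
    ENNReal.ofReal ((A + ‖v‖ ^ 2) ^ (-(((d : ℝ) + 1 + α) / 2)))) w, slice_core hα hA]
  have e2 : A ^ (-((1 + α) / 2)) = |x (Fin.last d) - t| ^ (-(1 + α)) := by
    rw [hAdef, ← sq_abs, ← rpow_natCast, ← rpow_mul (abs_nonneg _)]
    congr 1
    push_cast; ring
  rw [e2]
  ring
lemma oneD_1 {α δ X : ℝ} (hα : 0 < α) (hδ : δ < 1) (hX : 0 < X) :
    ∫⁻ t : ℝ, (if t < δ * X then 1 else 0) * ENNReal.ofReal (|X - t| ^ (-(1 + α))) =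
      ENNReal.ofReal (X ^ (-α)) * ENNReal.ofReal ((1 - δ) ^ (-α) / α) := by
  have h1δ : 0 < 1 - δ := by linarith
  have hc : 0 < (1 - δ) * X := by positivity
  have e : ∀ t : ℝ, (if t < δ * X then 1 else 0) * ENNReal.ofReal (|X - t| ^ (-(1 + α))) =
      (fun r : ℝ => (Ioi ((1 - δ) * X)).indicator
        (fun r : ℝ => ENNReal.ofReal (r ^ (-(1 + α)))) r) (X - t) := by
    intro t
    by_cases ht : t < δ * X
    · have h2 : (1 - δ) * X < X - t := by linarith
      simp only [ht, if_true, one_mul]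
      rw [indicator_of_mem (by exact h2), abs_of_pos (hc.trans h2)]
    · have h2 : ¬ ((1 - δ) * X < X - t) := by linarith
      simp only [ht, if_false, zero_mul]
      rw [indicator_of_notMem (by exact h2)]
  simp_rw [e]
  rw [lintegral_sub_left_eq_self (fun r : ℝ => (Ioi ((1 - δ) * X)).indicator
        (fun r : ℝ => ENNReal.ofReal (r ^ (-(1 + α)))) r) X, lintegral_indicator measurableSet_Ioi]
  have hI := integral_Ioi_rpow_of_lt (a := -(1 + α)) (by linarith) hc
  have hv : -((1 - δ) * X) ^ (-(1 + α) + 1) / (-(1 + α) + 1) = X ^ (-α) * ((1 - δ) ^ (-α) / α) := by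
    rw [show -(1 + α) + 1 = -α by ring, mul_rpow h1δ.le hX.le]
    field_simp
  rw [hv] at hI
  rw [lintegral_of_integral _ _ hI, ENNReal.ofReal_mul (by positivity)]
  · refine (ae_restrict_iff' measurableSet_Ioi).2 (ae_of_all _ fun t ht => ?_)
    exact rpow_nonneg (hc.trans ht).le _
  · positivity

lemma oneD_2 {α δ X : ℝ} (hδ : δ < 1) (hX : 0 < X) (k : ℝ → ENNReal) :
    ∫⁻ t : ℝ, (if 0 < t ∧ t < δ * X then k (t / X) else 0) *
        ENNReal.ofReal (|X - t| ^ (-(1 + α))) =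
      ENNReal.ofReal (X ^ (-α)) * ∫⁻ s in Ioo 0 δ, k s * ENNReal.ofReal ((1 - s) ^ (-(1 + α))) := by
  have e : ∀ t : ℝ, (if 0 < t ∧ t < δ * X then k (t / X) else 0) *
        ENNReal.ofReal (|X - t| ^ (-(1 + α))) = (Ioo 0 (δ * X)).indicator (fun t => k (t / X) *
        ENNReal.ofReal (|X - t| ^ (-(1 + α)))) t := by
    intro t
    simp only [indicator, mem_Ioo]
    split_ifs <;> simp
  simp_rw [e]
  rw [lintegral_indicator measurableSet_Ioo]
  have him : (fun s : ℝ => s * X) '' Ioo 0 δ = Ioo 0 (δ * X) := by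
    rw [image_mul_right_Ioo _ _ hX, zero_mul]
  rw [← him, lintegral_image_eq_lintegral_abs_deriv_mul (f' := fun _ => X) measurableSet_Ioo
    (fun x _ => by simpa using ((hasDerivAt_id x).mul_const X).hasDerivWithinAt)
    (fun a _ b _ hab => mul_right_cancel₀ hX.ne' hab)]
  rw [← lintegral_const_mul' _ _ ENNReal.ofReal_ne_top]
  refine setLIntegral_congr_fun measurableSet_Ioo fun s hs => ?_
  have h1s : 0 < 1 - s := by linarith [hs.2]
  rw [mul_div_cancel_right₀ _ hX.ne', show X - s * X = X * (1 - s) by ring, abs_of_pos hX,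
    abs_of_pos (by positivity), mul_rpow hX.le h1s.le, ENNReal.ofReal_mul (by positivity),
    show (-α) = -(1 + α) + 1 by ring, rpow_add_one hX.ne', ENNReal.ofReal_mul (by positivity)]
  ring

lemma oneD_3 {α δ Y : ℝ} (hδ0 : 0 < δ) (hδ : δ < 1) (hY : 0 < Y) (k : ℝ → ENNReal) :
    ∫⁻ t : ℝ, (if Y < δ * t then k (Y / t) else 0) *
        ENNReal.ofReal (|Y - t| ^ (-(1 + α))) =
      ENNReal.ofReal (Y ^ (-α)) *
        ∫⁻ s in Ioo 0 δ, k s * ENNReal.ofReal (s ^ (α - 1) * (1 - s) ^ (-(1 + α))) := by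
  have e : ∀ t : ℝ, (if Y < δ * t then k (Y / t) else 0) *
        ENNReal.ofReal (|Y - t| ^ (-(1 + α))) = (Ioi (Y / δ)).indicator (fun t => k (Y / t) *
        ENNReal.ofReal (|Y - t| ^ (-(1 + α)))) t := by
    intro t
    simp only [indicator, mem_Ioi, div_lt_iff₀' hδ0]
    split_ifs <;> simp
  simp_rw [e]
  rw [lintegral_indicator measurableSet_Ioi]
  have him : (fun s : ℝ => Y / s) '' Ioo 0 δ = Ioi (Y / δ) := by
    ext t
    simp only [mem_image, mem_Ioo, mem_Ioi]
    constructor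
    · rintro ⟨s, ⟨h0, h1⟩, rfl⟩
      exact div_lt_div_of_pos_left hY h0 h1
    · intro ht
      have ht0 : 0 < t := lt_trans (by positivity) ht
      refine ⟨Y / t, ⟨by positivity, ?_⟩, by field_simp⟩
      rw [div_lt_iff₀ ht0]
      rwa [div_lt_iff₀' hδ0] at ht
  rw [← him, lintegral_image_eq_lintegral_abs_deriv_mul (f' := fun s => -(Y / s ^ 2))
    measurableSet_Ioo
    (fun x hx => by
      have := ((hasDerivAt_inv hx.1.ne').const_mul Y).hasDerivWithinAt (s := Ioo 0 δ)
      simp only [div_eq_mul_inv]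
      refine this.congr_deriv ?_
      ring)
    (fun a ha b hb hab => by
      have ha0 := ha.1
      have hb0 := hb.1
      field_simp at hab
      exact hab.symm)]
  rw [← lintegral_const_mul' _ _ ENNReal.ofReal_ne_top]
  refine setLIntegral_congr_fun measurableSet_Ioo fun s hs => ?_
  have hs0 := hs.1
  have h1s : 0 < 1 - s := by linarith [hs.2]
  have e1 : Y / (Y / s) = s := by field_simp
  have e2 : |Y - Y / s| = Y * (1 - s) / s := by
    rw [abs_of_nonpos]
    · field_simp; ring
    · rw [show Y - Y / s = - (Y * (1 - s) / s) by field_simp; ring]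
      have : 0 < Y * (1 - s) / s := by positivity
      linarith
  have e3 : |-(Y / s ^ 2)| * (Y * (1 - s) / s) ^ (-(1 + α)) =
      Y ^ (-α) * (s ^ (α - 1) * (1 - s) ^ (-(1 + α))) := by
    rw [abs_neg, abs_of_pos (by positivity), div_rpow (by positivity) hs0.le,
      mul_rpow hY.le h1s.le, show (-α) = -(1 + α) + 1 by ring, rpow_add_one hY.ne',
      rpow_neg hs0.le (1 + α), show α - 1 = (1 + α) - (2 : ℕ) by push_cast; ring,
      rpow_sub_natCast hs0.ne']
    field_simp
  rw [e1, e2, mul_left_comm, ← ENNReal.ofReal_mul (by positivity), e3,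
    ENNReal.ofReal_mul (by positivity)]
  ring

lemma lint_trunc {a b δ : ℝ} (ha : -1 < a) (hδ0 : 0 < δ) (hδ : δ < 1) :
    ∫⁻ s in Ioo 0 δ, ENNReal.ofReal (s ^ a * (1 - s) ^ b) =
      ENNReal.ofReal (∫ s in (0:ℝ)..δ, s ^ a * (1 - s) ^ b) := by
  have h := trunc_integrable (b := b) ha hδ0 hδ
  rw [intervalIntegrable_iff_integrableOn_Ioo_of_le hδ0.le] at h
  rw [intervalIntegral.integral_of_le hδ0.le, integral_Ioc_eq_integral_Ioo,
    ofReal_integral_eq_lintegral_ofReal h]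
  refine (ae_restrict_iff' measurableSet_Ioo).2 (ae_of_all _ fun s hs => ?_)
  have h1s : 0 < 1 - s := by linarith [hs.2]
  have := hs.1
  positivity
lemma kernel_integrable {d : ℕ} {α : ℝ} (hα0 : 0 < α) (hα2 : α < 2) :
    Integrable (fun z : EuclideanSpace ℝ (Fin (d + 1)) =>
      min 1 (‖z‖ ^ 2) * ‖z‖ ^ (-((d : ℝ) + 1 + α))) := by
  rw [integrable_fun_norm_addHaar volume (f := fun r : ℝ => min 1 (r ^ 2) * r ^ (-((d : ℝ) + 1 + α)))]
  simp only [finrank_euclideanSpace, Fintype.card_fin, Nat.add_sub_cancel, smul_eq_mul]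
  rw [← Ioc_union_Ioi_eq_Ioi (zero_le_one : (0:ℝ) ≤ 1)]
  refine IntegrableOn.union ?_ ?_
  · have h : IntegrableOn (fun r : ℝ => r ^ (1 - α)) (Ioc 0 1) := by
      rw [← intervalIntegrable_iff_integrableOn_Ioc_of_le zero_le_one]
      exact intervalIntegral.intervalIntegrable_rpow' (by linarith)
    refine h.congr_fun (fun r hr => ?_) measurableSet_Ioc
    have hr0 := hr.1
    simp only
    rw [min_eq_right (by nlinarith [hr.2]), ← rpow_natCast, ← rpow_natCast, ← rpow_add hr0,
      ← rpow_add hr0]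
    congr 1; push_cast; ring
  · have h : IntegrableOn (fun r : ℝ => r ^ (-1 - α)) (Ioi 1) :=
      integrableOn_Ioi_rpow_of_lt (by linarith) one_pos
    refine h.congr_fun (fun r hr => ?_) measurableSet_Ioi
    have hr1 : (1:ℝ) < r := hr
    have hr0 : (0:ℝ) < r := by linarith
    simp only
    rw [min_eq_left (by nlinarith), one_mul, ← rpow_natCast, ← rpow_add hr0]
    congr 1; ring

lemma F_integrable {d : ℕ} {α : ℝ} (hα0 : 0 < α) (hα2 : α < 2)
    (u : EuclideanSpace ℝ (Fin (d + 1)) → ℝ) (hu : ContDiff ℝ (⊤ : ℕ∞) u)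
    (hcs : HasCompactSupport u) :
    Integrable (fun z : EuclideanSpace ℝ (Fin (d + 1)) × EuclideanSpace ℝ (Fin (d + 1)) =>
      (u z.1 - u z.2) ^ 2 / ‖z.1 - z.2‖ ^ ((d : ℝ) + 1 + α)) (volume.prod volume) := by
  obtain ⟨L, hL⟩ := hu.lipschitzWith_of_hasCompactSupport hcs (by simp)
  obtain ⟨M, hM⟩ := hcs.exists_bound_of_continuous hu.continuous
  set S := tsupport u with hS
  have hSm : MeasurableSet S := (isClosed_tsupport u).measurableSet
  have hf : Integrable (S.indicator (fun _ => (1:ℝ)))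
      (volume : Measure (EuclideanSpace ℝ (Fin (d + 1)))) := by
    rw [integrable_indicator_iff hSm]
    exact integrableOn_const hcs.isCompact.measure_lt_top.ne
  have hc := hf.convolution_integrand (ContinuousLinearMap.mul ℝ ℝ) (kernel_integrable (d := d) hα0 hα2)
  have hc2 := (hc.add hc.swap).const_mul (L ^ 2 + 4 * M ^ 2 : ℝ)
  have hcont := hu.continuous
  have hm := hcont.measurable
  refine hc2.mono' (Measurable.aestronglyMeasurable (by fun_prop)) (ae_of_all _ fun z => ?_)
  obtain ⟨x, y⟩ := z
  simp only [ContinuousLinearMap.mul_apply', Pi.add_apply, Function.comp, Prod.swap]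
  rw [norm_sub_rev y x]
  set r := ‖x - y‖ with hr
  have hr0 : 0 ≤ r := norm_nonneg _
  have hK : 0 ≤ r ^ (-((d : ℝ) + 1 + α)) := by positivity
  rw [div_eq_mul_inv, ← rpow_neg hr0, norm_eq_abs, abs_of_nonneg (by positivity)]
  have key : (u x - u y) ^ 2 ≤ (L ^ 2 + 4 * M ^ 2 : ℝ) *
      ((S.indicator (fun _ => (1:ℝ)) y + S.indicator (fun _ => (1:ℝ)) x) * min 1 (r ^ 2)) := by
    have hind : ∀ z, 0 ≤ S.indicator (fun _ => (1:ℝ)) z :=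
      fun z => indicator_nonneg (fun _ _ => zero_le_one) z
    by_cases hz : u x = 0 ∧ u y = 0
    · rw [hz.1, hz.2]
      have h1 := hind x
      have h2 := hind y
      have : 0 ≤ min 1 (r ^ 2) := by positivity
      simp only [sub_self, ne_eq, OfNat.ofNat_ne_zero, not_false_eq_true, zero_pow]
      positivity
    · have h1 : 1 ≤ S.indicator (fun _ => (1:ℝ)) y + S.indicator (fun _ => (1:ℝ)) x := by
        by_cases hx : u x = 0
        · have hy : u y ≠ 0 := fun h => hz ⟨hx, h⟩
          rw [indicator_of_mem (subset_tsupport u hy)]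
          linarith [hind x]
        · rw [indicator_of_mem (subset_tsupport u hx) (f := fun _ => (1:ℝ))]
          linarith [hind y]
      have h2 : (u x - u y) ^ 2 ≤ (L ^ 2 + 4 * M ^ 2 : ℝ) * min 1 (r ^ 2) := by
        have a1 : |u x - u y| ≤ L * r := by
          have := hL.dist_le_mul x y
          rwa [Real.dist_eq, dist_eq_norm] at this
        have a2 : |u x - u y| ≤ 2 * M := by
          have h3 := hM x
          have h4 := hM y
          rw [norm_eq_abs] at h3 h4
          have := abs_sub (u x) (u y)
          linarith
        rw [← sq_abs]
        have b1 : |u x - u y| ^ 2 ≤ (L * r) ^ 2 := by gcongr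
        have b2 : |u x - u y| ^ 2 ≤ (2 * M) ^ 2 := by gcongr
        rcases min_cases 1 (r ^ 2) with ⟨h, _⟩ | ⟨h, _⟩ <;> rw [h] <;>
          nlinarith [sq_nonneg (L : ℝ), sq_nonneg M, sq_nonneg (M * r)]
      refine h2.trans ?_
      have : 0 ≤ min 1 (r ^ 2) := by positivity
      gcongr
      nlinarith
  calc _ ≤ _ := mul_le_mul_of_nonneg_right key hK
    _ = _ := by ring
lemma weighted {d : ℕ} {α : ℝ} (hα : 0 < α) (V : EuclideanSpace ℝ (Fin (d + 1)) → ENNReal)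
    (hV : Measurable V) (hV0 : ∀ x, x (Fin.last d) ≤ 0 → V x = 0)
    (H : ℝ → ℝ → ENNReal) (hH : Measurable (Function.uncurry H)) (C : ENNReal)
    (hC : ∀ X : ℝ, 0 < X → ∫⁻ t, H X t * ENNReal.ofReal (|X - t| ^ (-(1 + α))) =
      ENNReal.ofReal (X ^ (-α)) * C) :
    ∫⁻ x : EuclideanSpace ℝ (Fin (d + 1)), ∫⁻ y : EuclideanSpace ℝ (Fin (d + 1)),
      V x * (H (x (Fin.last d)) (y (Fin.last d)) *
        ENNReal.ofReal (‖x - y‖ ^ (-((d : ℝ) + 1 + α)))) =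
      ENNReal.ofReal (kap d α) * C * ∫⁻ x, V x * ENNReal.ofReal (x (Fin.last d) ^ (-α)) := by
  rw [← lintegral_const_mul _ (by fun_prop)]
  refine lintegral_congr fun x => ?_
  by_cases hx : x (Fin.last d) ≤ 0
  · simp [hV0 x hx]
  · push Not at hx
    have hHx : Measurable (H (x (Fin.last d))) := hH.comp (measurable_const.prodMk measurable_id)
    rw [lintegral_const_mul _ (by fun_prop), slice hα x _ hHx, hC _ hx]
    ring

lemma ground_ineq {a b X Y p : ℝ} (hX : 0 < X) (hY : 0 < Y) :
    a ^ 2 + b ^ 2 ≤ (a - b) ^ 2 + a ^ 2 * (Y / X) ^ p + b ^ 2 * (Y / X) ^ (-p) := by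
  have hr : 0 < (Y / X) ^ p := by positivity
  rw [rpow_neg (by positivity)]
  set r := (Y / X) ^ p
  have : (a - b) ^ 2 + a ^ 2 * r + b ^ 2 * r⁻¹ - (a ^ 2 + b ^ 2) = (a * r - b) ^ 2 / r := by
    field_simp; ring
  have h2 : 0 ≤ (a * r - b) ^ 2 / r := by positivity
  linarith

lemma main_lintegral {d : ℕ} {α δ : ℝ} (hα0 : 0 < α) (hδ0 : 0 < δ) (hδ : δ < 1)
    (u : EuclideanSpace ℝ (Fin (d + 1)) → ℝ) (hu : Measurable u)
    (hu0 : ∀ x, x (Fin.last d) ≤ 0 → u x = 0) :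
    2 * (ENNReal.ofReal (kap d α) * (ENNReal.ofReal ((1 - δ) ^ (-α) / α) +
        ENNReal.ofReal (∫ s in (0:ℝ)..δ, s ^ (α - 1) * (1 - s) ^ (-(1 + α)))) *
        ∫⁻ x, ENNReal.ofReal (u x ^ 2) * ENNReal.ofReal (x (Fin.last d) ^ (-α))) ≤
      (∫⁻ z : EuclideanSpace ℝ (Fin (d + 1)) × EuclideanSpace ℝ (Fin (d + 1)),
        ENNReal.ofReal ((u z.1 - u z.2) ^ 2 / ‖z.1 - z.2‖ ^ ((d : ℝ) + 1 + α)) ∂(volume.prod volume))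
      + 2 * (ENNReal.ofReal (kap d α) *
        (2 * ENNReal.ofReal (∫ s in (0:ℝ)..δ, s ^ ((α - 1) / 2) * (1 - s) ^ (-(1 + α)))) *
        ∫⁻ x, ENNReal.ofReal (u x ^ 2) * ENNReal.ofReal (x (Fin.last d) ^ (-α))) := by
  set p := (α - 1) / 2 with hp
  set U := ∫⁻ x, ENNReal.ofReal (u x ^ 2) * ENNReal.ofReal (x (Fin.last d) ^ (-α)) with hU
  set P := ∫ s in (0:ℝ)..δ, s ^ p * (1 - s) ^ (-(1 + α)) with hP
  set Q := ∫ s in (0:ℝ)..δ, s ^ (α - 1) * (1 - s) ^ (-(1 + α)) with hQ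
  set V : EuclideanSpace ℝ (Fin (d + 1)) → ENNReal := fun x => ENNReal.ofReal (u x ^ 2) with hVdef
  have hV : Measurable V := by fun_prop
  have hV0 : ∀ x, x (Fin.last d) ≤ 0 → V x = 0 := fun x hx => by simp [hVdef, hu0 x hx]
  let H1 : ℝ → ℝ → ENNReal := fun X t => if t < δ * X then 1 else 0
  let H2 : ℝ → ℝ → ENNReal := fun Y t => if Y < δ * t then (fun _ => 1) (Y / t) else 0
  let H3 : ℝ → ℝ → ENNReal := fun X t =>
    if 0 < t ∧ t < δ * X then (fun s => ENNReal.ofReal (s ^ p)) (t / X) else 0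
  let H4 : ℝ → ℝ → ENNReal := fun Y t =>
    if Y < δ * t then (fun s => ENNReal.ofReal (s ^ (-p))) (Y / t) else 0
  have mH1 : Measurable (Function.uncurry H1) := by
    refine Measurable.ite (measurableSet_lt (by fun_prop) (by fun_prop)) (by fun_prop) (by fun_prop)
  have mH2 : Measurable (Function.uncurry H2) := by
    refine Measurable.ite (measurableSet_lt (by fun_prop) (by fun_prop)) (by fun_prop) (by fun_prop)
  have mH3 : Measurable (Function.uncurry H3) := by
    have s1 : MeasurableSet {a : ℝ × ℝ | 0 < a.2} := measurableSet_lt (by fun_prop) (by fun_prop)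
    have s2 : MeasurableSet {a : ℝ × ℝ | a.2 < δ * a.1} :=
      measurableSet_lt (by fun_prop) (by fun_prop)
    exact Measurable.ite (s1.inter s2) (by fun_prop) (by fun_prop)
  have mH4 : Measurable (Function.uncurry H4) := by
    refine Measurable.ite (measurableSet_lt (by fun_prop) (by fun_prop)) (by fun_prop) (by fun_prop)
  have w1 := weighted hα0 V hV hV0 H1 mH1 _ (fun X hX => oneD_1 hα0 hδ hX)
  have w2 := weighted hα0 V hV hV0 H2 mH2 _ (fun X hX => oneD_3 hδ0 hδ hX (fun _ => 1))
  have w3 := weighted hα0 V hV hV0 H3 mH3 _ (fun X hX => oneD_2 hδ hX (fun s => ENNReal.ofReal (s ^ p)))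
  have w4 := weighted hα0 V hV hV0 H4 mH4 _ (fun X hX => oneD_3 hδ0 hδ hX (fun s => ENNReal.ofReal (s ^ (-p))))
  have c2 : ∫⁻ s in Ioo 0 δ, (1 : ENNReal) * ENNReal.ofReal (s ^ (α - 1) * (1 - s) ^ (-(1 + α))) =
      ENNReal.ofReal Q := by
    simp_rw [one_mul]
    exact lint_trunc (by linarith) hδ0 hδ
  have c3 : ∫⁻ s in Ioo 0 δ, ENNReal.ofReal (s ^ p) * ENNReal.ofReal ((1 - s) ^ (-(1 + α))) =
      ENNReal.ofReal P := by
    rw [hP, ← lint_trunc (by linarith) hδ0 hδ]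
    refine setLIntegral_congr_fun measurableSet_Ioo fun s hs => ?_
    rw [ENNReal.ofReal_mul (rpow_nonneg hs.1.le _)]
  have c4 : ∫⁻ s in Ioo 0 δ, ENNReal.ofReal (s ^ (-p)) *
      ENNReal.ofReal (s ^ (α - 1) * (1 - s) ^ (-(1 + α))) = ENNReal.ofReal P := by
    rw [hP, ← lint_trunc (by linarith) hδ0 hδ]
    refine setLIntegral_congr_fun measurableSet_Ioo fun s hs => ?_
    rw [← ENNReal.ofReal_mul (rpow_nonneg hs.1.le _), ← mul_assoc, ← rpow_add hs.1]
    congr 3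
    rw [hp]; ring
  rw [c2] at w2
  rw [c3] at w3
  rw [c4] at w4
  let K : EuclideanSpace ℝ (Fin (d + 1)) → EuclideanSpace ℝ (Fin (d + 1)) → ENNReal := fun x y => ENNReal.ofReal (‖x - y‖ ^ (-((d : ℝ) + 1 + α)))
  have mK : Measurable (Function.uncurry K) := by
    unfold Function.uncurry; fun_prop
  let T : (ℝ → ℝ → ENNReal) → EuclideanSpace ℝ (Fin (d + 1)) × EuclideanSpace ℝ (Fin (d + 1)) → ENNReal := fun H z =>
    V z.1 * (H (z.1 (Fin.last d)) (z.2 (Fin.last d)) * K z.1 z.2)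
  have mT : ∀ H, Measurable (Function.uncurry H) → Measurable (T H) := by
    intro H hH
    have a1 : Measurable fun z : EuclideanSpace ℝ (Fin (d + 1)) × EuclideanSpace ℝ (Fin (d + 1)) => H (z.1 (Fin.last d)) (z.2 (Fin.last d)) :=
      hH.comp (f := fun z : EuclideanSpace ℝ (Fin (d + 1)) × EuclideanSpace ℝ (Fin (d + 1)) => (z.1 (Fin.last d), z.2 (Fin.last d))) (by fun_prop)
    exact (hV.comp measurable_fst).mul (a1.mul mK)
  have iT : ∀ H, Measurable (Function.uncurry H) →
      ∫⁻ z, T H z ∂(volume.prod volume) = ∫⁻ x : EuclideanSpace ℝ (Fin (d + 1)), ∫⁻ y : EuclideanSpace ℝ (Fin (d + 1)), V x * (H (x (Fin.last d)) (y (Fin.last d)) *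
        ENNReal.ofReal (‖x - y‖ ^ (-((d : ℝ) + 1 + α)))) := by
    intro H hH
    rw [lintegral_prod _ (mT H hH).aemeasurable]
  have iTs : ∀ H, Measurable (Function.uncurry H) →
      ∫⁻ z, T H z.swap ∂((volume : Measure (EuclideanSpace ℝ (Fin (d + 1)))).prod (volume : Measure (EuclideanSpace ℝ (Fin (d + 1))))) =
        ∫⁻ z, T H z ∂(volume.prod volume) := by
    intro H hH
    exact lintegral_prod_swap _
  let F : EuclideanSpace ℝ (Fin (d + 1)) × EuclideanSpace ℝ (Fin (d + 1)) → ENNReal := fun z =>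
    ENNReal.ofReal ((u z.1 - u z.2) ^ 2 / ‖z.1 - z.2‖ ^ ((d : ℝ) + 1 + α))
  have mF : Measurable F := by fun_prop
  let R : Set (EuclideanSpace ℝ (Fin (d + 1)) × EuclideanSpace ℝ (Fin (d + 1))) := {z | 0 < z.1 (Fin.last d) ∧ z.2 (Fin.last d) < δ * z.1 (Fin.last d)}
  have mR : MeasurableSet R := by
    have s1 : MeasurableSet {z : EuclideanSpace ℝ (Fin (d + 1)) × EuclideanSpace ℝ (Fin (d + 1)) |
        0 < z.1 (Fin.last d)} := measurableSet_lt (by fun_prop) (by fun_prop)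
    have s2 : MeasurableSet {z : EuclideanSpace ℝ (Fin (d + 1)) × EuclideanSpace ℝ (Fin (d + 1)) |
        z.2 (Fin.last d) < δ * z.1 (Fin.last d)} :=
      measurableSet_lt (by fun_prop) (by fun_prop)
    exact s1.inter s2
  have mFR : Measurable (R.indicator F) := mF.indicator mR
  have hFR : 2 * ∫⁻ z, R.indicator F z ∂((volume : Measure (EuclideanSpace ℝ (Fin (d + 1)))).prod (volume : Measure (EuclideanSpace ℝ (Fin (d + 1))))) ≤
      ∫⁻ z, F z ∂((volume : Measure (EuclideanSpace ℝ (Fin (d + 1)))).prod (volume : Measure (EuclideanSpace ℝ (Fin (d + 1))))) := by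
    have hs : ∫⁻ z, R.indicator F z.swap ∂((volume : Measure (EuclideanSpace ℝ (Fin (d + 1)))).prod (volume : Measure (EuclideanSpace ℝ (Fin (d + 1))))) =
        ∫⁻ z, R.indicator F z ∂((volume : Measure (EuclideanSpace ℝ (Fin (d + 1)))).prod (volume : Measure (EuclideanSpace ℝ (Fin (d + 1))))) :=
      lintegral_prod_swap _
    rw [two_mul]
    nth_rewrite 2 [← hs]
    rw [← lintegral_add_left mFR]
    refine lintegral_mono fun z => ?_
    obtain ⟨x, y⟩ := z
    by_cases h1 : (x, y) ∈ R
    · have h2 : (x, y).swap ∉ R := by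
        intro h2
        have a1 := h1.1
        have a2 := h1.2
        have a3 := h2.1
        have a4 := h2.2
        simp only [Prod.swap] at a1 a2 a3 a4
        nlinarith
      simp only [indicator_of_mem h1, indicator_of_notMem h2, add_zero, le_refl]
    · have h3 : F (x, y).swap = F (x, y) := by
        simp only [F, Prod.swap]
        rw [norm_sub_rev, ← neg_sub, neg_sq]
      simp only [indicator_of_notMem h1, zero_add]
      rw [← h3]
      exact indicator_le_self _ _ _
  have hpt : ∀ z, T H1 z + T H2 z.swap ≤ R.indicator F z + (T H3 z + T H4 z.swap) := by
    rintro ⟨x, y⟩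
    simp only [T, Prod.swap, H1, H2, H3, H4]
    have hKs : K y x = K x y := by simp only [K, norm_sub_rev]
    rw [hKs]
    by_cases hx : x (Fin.last d) ≤ 0
    · rw [hV0 x hx]
      have : V y * ((if y (Fin.last d) < δ * x (Fin.last d) then 1 else 0) * K x y) = 0 := by
        by_cases hy : y (Fin.last d) < δ * x (Fin.last d)
        · rw [hV0 y (by nlinarith), zero_mul]
        · simp [hy]
      rw [this]
      simp
    push Not at hx
    by_cases hR : y (Fin.last d) < δ * x (Fin.last d)
    · have hmem : (x, y) ∈ R := ⟨hx, hR⟩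
      rw [indicator_of_mem hmem]
      have hKn : 0 ≤ ‖x - y‖ ^ (-((d : ℝ) + 1 + α)) := by positivity
      have hFe : F (x, y) = ENNReal.ofReal ((u x - u y) ^ 2) * K x y := by
        simp only [F, K]
        rw [← ENNReal.ofReal_mul (by positivity), rpow_neg (norm_nonneg _), div_eq_mul_inv]
      rw [hFe]
      by_cases hy : y (Fin.last d) ≤ 0
      · have huy := hu0 y hy
        have hVy := hV0 y hy
        simp only [hVy, huy, hR, if_true, zero_mul, sub_zero, one_mul, add_zero]
        exact le_self_add
      · push Not at hy
        simp only [hR, hy, and_self, if_true, one_mul]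
        have hg := ground_ineq (a := u x) (b := u y) (p := p) hx hy
        have hE : V x + V y ≤ ENNReal.ofReal ((u x - u y) ^ 2) +
            (V x * ENNReal.ofReal ((y (Fin.last d) / x (Fin.last d)) ^ p) +
              V y * ENNReal.ofReal ((y (Fin.last d) / x (Fin.last d)) ^ (-p))) := by
          simp only [hVdef]
          rw [← ENNReal.ofReal_mul (by positivity), ← ENNReal.ofReal_mul (by positivity),
            ← ENNReal.ofReal_add (by positivity) (by positivity),
            ← ENNReal.ofReal_add (by positivity) (by positivity),
            ← ENNReal.ofReal_add (by positivity) (by positivity)]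
          refine ENNReal.ofReal_le_ofReal ?_
          linarith
        calc V x * K x y + V y * K x y = (V x + V y) * K x y := by ring
          _ ≤ _ * K x y := mul_le_mul_left hE _
          _ = _ := by ring
    · simp [hR]
  have hmono : ∫⁻ z, (T H1 z + T H2 z.swap) ∂((volume : Measure (EuclideanSpace ℝ (Fin (d + 1)))).prod (volume : Measure (EuclideanSpace ℝ (Fin (d + 1))))) ≤
      ∫⁻ z, (R.indicator F z + (T H3 z + T H4 z.swap))
        ∂((volume : Measure (EuclideanSpace ℝ (Fin (d + 1)))).prod (volume : Measure (EuclideanSpace ℝ (Fin (d + 1))))) := lintegral_mono hpt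
  rw [lintegral_add_left (mT _ mH1), lintegral_add_left mFR, lintegral_add_left (mT _ mH3),
    iTs _ mH2, iTs _ mH4, iT _ mH1, iT _ mH2, iT _ mH3, iT _ mH4, w1, w2, w3, w4] at hmono
  calc _ = 2 * (ENNReal.ofReal (kap d α) * ENNReal.ofReal ((1 - δ) ^ (-α) / α) * U +
        ENNReal.ofReal (kap d α) * ENNReal.ofReal Q * U) := by ring
    _ ≤ 2 * ((∫⁻ z, R.indicator F z ∂(volume.prod volume)) +
        (ENNReal.ofReal (kap d α) * ENNReal.ofReal P * U +
          ENNReal.ofReal (kap d α) * ENNReal.ofReal P * U)) := mul_le_mul' le_rfl hmono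
    _ = 2 * ∫⁻ z, R.indicator F z ∂((volume : Measure (EuclideanSpace ℝ (Fin (d + 1)))).prod (volume : Measure (EuclideanSpace ℝ (Fin (d + 1))))) +
      2 * (ENNReal.ofReal (kap d α) * (2 * ENNReal.ofReal P) * U) := by ring
    _ ≤ _ := add_le_add hFR le_rfl

theorem fractional_hardy_killed (d : ℕ) (α : ℝ) (hα0 : 0 < α) (hα2 : α < 2)
    (u : EuclideanSpace ℝ (Fin (d + 1)) → ℝ) (hu : ContDiff ℝ (⊤ : ℕ∞) u)
    (hcs : HasCompactSupport u) (hsupp : tsupport u ⊆ halfSpace d) :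
    (Real.Gamma ((1 + α) / 2) ^ 2 / Real.pi) *
        ∫ x in halfSpace d, u x ^ 2 * x (Fin.last d) ^ (-α) ≤
      (1 / 2) * fracLapConst (d + 1) α *
        ∫ x : EuclideanSpace ℝ (Fin (d + 1)), ∫ y : EuclideanSpace ℝ (Fin (d + 1)),
          (u x - u y) ^ 2 / ‖x - y‖ ^ ((d : ℝ) + 1 + α) := by
  have hu0 : ∀ x, x (Fin.last d) ≤ 0 → u x = 0 := by
    intro x hx
    by_contra h
    have : 0 < x (Fin.last d) := hsupp (subset_tsupport u h)
    linarith
  have hFi := F_integrable hα0 hα2 u hu hcs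
  have hFprod := integral_prod _ hFi
  simp only at hFprod
  rw [← hFprod]
  have hset : ∫ x in halfSpace d, u x ^ 2 * x (Fin.last d) ^ (-α) =
      ∫ x, u x ^ 2 * x (Fin.last d) ^ (-α) := by
    refine setIntegral_eq_integral_of_forall_compl_eq_zero fun x hx => ?_
    rw [hu0 x (not_lt.1 hx)]; simp
  rw [hset]
  have hUi : Integrable (fun x : EuclideanSpace ℝ (Fin (d + 1)) =>
      u x ^ 2 * x (Fin.last d) ^ (-α)) := by
    rw [← integrableOn_iff_integrable_of_support_subset (s := tsupport u)]
    · refine ContinuousOn.integrableOn_compact hcs.isCompact ?_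
      refine (hu.continuous.pow 2).continuousOn.mul ?_
      intro x hx
      refine ContinuousAt.continuousWithinAt ?_
      have hx' : 0 < x (Fin.last d) := hsupp hx
      exact ContinuousAt.rpow_const (by fun_prop) (Or.inl hx'.ne')
    · intro x hx
      refine subset_tsupport u fun h => hx ?_
      simp [h]
  set I := ∫ z : EuclideanSpace ℝ (Fin (d + 1)) × EuclideanSpace ℝ (Fin (d + 1)),
    (u z.1 - u z.2) ^ 2 / ‖z.1 - z.2‖ ^ ((d : ℝ) + 1 + α) ∂(volume.prod volume) with hI
  have hUnn : ∀ x : EuclideanSpace ℝ (Fin (d + 1)), 0 ≤ u x ^ 2 * x (Fin.last d) ^ (-α) := by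
    intro x
    by_cases hx : x (Fin.last d) ≤ 0
    · simp [hu0 x hx]
    · push Not at hx
      positivity
  have hUl : ∫⁻ x, ENNReal.ofReal (u x ^ 2) * ENNReal.ofReal (x (Fin.last d) ^ (-α)) =
      ENNReal.ofReal (∫ x, u x ^ 2 * x (Fin.last d) ^ (-α)) := by
    rw [ofReal_integral_eq_lintegral_ofReal hUi (ae_of_all _ hUnn)]
    refine lintegral_congr fun x => ?_
    rw [ENNReal.ofReal_mul (sq_nonneg _)]
  set U := ∫ x, u x ^ 2 * x (Fin.last d) ^ (-α) with hUdef
  have hU0 : 0 ≤ U := integral_nonneg hUnn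
  have hI0 : 0 ≤ I := integral_nonneg fun z => by positivity
  have hGd : 0 < Gamma (((d : ℝ) + 1 + α) / 2) := Gamma_pos_of_pos (by positivity)
  have hG1 : 0 < Gamma ((1 + α) / 2) := Gamma_pos_of_pos (by positivity)
  have hk : 0 < kap d α := by unfold kap; positivity
  have hreal : ∀ δ : ℝ, 0 < δ → δ < 1 →
      2 * kap d α * U * ((1 - δ) ^ (-α) / α +
        (∫ s in (0:ℝ)..δ, s ^ (α - 1) * (1 - s) ^ (-(1 + α)))
        - 2 * (∫ s in (0:ℝ)..δ, s ^ ((α - 1) / 2) * (1 - s) ^ (-(1 + α)))) ≤ I := by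
    intro δ hδ0 hδ
    have h := main_lintegral (α := α) hα0 hδ0 hδ u hu.continuous.measurable hu0
    rw [hUl, ← ofReal_integral_eq_lintegral_ofReal hFi (ae_of_all _ fun z => by positivity)] at h
    have hpos : ∀ a b : ℝ, 0 ≤ ∫ s in (0:ℝ)..δ, s ^ a * (1 - s) ^ b := by
      intro a b
      refine intervalIntegral.integral_nonneg hδ0.le fun s hs => ?_
      have h1s : 0 ≤ 1 - s := by linarith [hs.2]
      have := hs.1
      positivity
    have p1 := hpos (α - 1) (-(1 + α))
    have p2 := hpos ((α - 1) / 2) (-(1 + α))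
    have p3 : 0 ≤ (1 - δ) ^ (-α) / α := by
      have : 0 ≤ 1 - δ := by linarith
      positivity
    set Q := ∫ s in (0:ℝ)..δ, s ^ (α - 1) * (1 - s) ^ (-(1 + α))
    set P := ∫ s in (0:ℝ)..δ, s ^ ((α - 1) / 2) * (1 - s) ^ (-(1 + α))
    have e2 : (2 : ENNReal) = ENNReal.ofReal 2 := by simp
    rw [← hI] at h
    simp only [e2] at h
    rw [← ENNReal.ofReal_add p3 p1, ← ENNReal.ofReal_mul hk.le,
      ← ENNReal.ofReal_mul (by positivity), ← ENNReal.ofReal_mul (by positivity),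
      ← ENNReal.ofReal_mul (by positivity), ← ENNReal.ofReal_mul (by positivity),
      ← ENNReal.ofReal_mul (by positivity), ← ENNReal.ofReal_mul (by positivity),
      ← ENNReal.ofReal_add (by positivity) (by positivity),
      ENNReal.ofReal_le_ofReal_iff (by positivity)] at h
    linarith
  have hlim := (G_tendsto hα0 hα2).const_mul (2 * kap d α * U)
  have hfin := le_of_tendsto hlim (by
    filter_upwards [Ioo_mem_nhdsLT (show (0:ℝ) < 1 by norm_num)] with δ hδ
    exact hreal δ hδ.1 hδ.2)
  have g4 : 0 < Gamma ((2 - α) / 2) := Gamma_pos_of_pos (by linarith)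
  have g3 : Gamma ((2 - α) / 2) = (-α / 2) * Gamma (-α / 2) := by
    rw [← Gamma_add_one (by linarith)]; congr 1; ring
  have g5 : 0 < |Gamma (-α / 2)| := by
    rw [abs_pos]; intro h; rw [h] at g3; linarith
  have hA : 0 < fracLapConst (d + 1) α := by
    unfold fracLapConst
    push_cast
    positivity
  have hmul := mul_le_mul_of_nonneg_left hfin (by positivity : 0 ≤ 1 / 2 * fracLapConst (d + 1) α)
  refine le_trans (le_of_eq ?_) hmul
  unfold fracLapConst kap
  push_cast
  have e1 : π ^ (((d : ℝ) + 1) / 2) = π ^ ((d : ℝ) / 2) * √π := by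
    rw [sqrt_eq_rpow, ← rpow_add pi_pos]; congr 1; ring
  have e3 : √π * √π = π := mul_self_sqrt pi_pos.le
  have hpi : 0 < π := pi_pos
  have hsp : 0 < √π := by positivity
  rw [e1]
  have hden : Gamma ((1 + α) / 2) ^ 2 / π = Gamma ((1 + α) / 2) ^ 2 / (√π * √π) := by rw [e3]
  rw [hden]
  generalize |Gamma (-α / 2)| = g at *
  field_simp
end
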